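/- arXiv:1001.1391 — 13 statements merged into one kernel-verified Lean document; each statement's English description precedes it below -/
import Mathlib

section
/- Let G be a group in universe u, let α : G ≃* G be an automorphism of G, and suppose given, for every group H in universe u and every group homomorphism f : G →* H, a group automorphism β f : H ≃* H, such that (i) β applied to the identity homomorphism of G equals α as a function, and (ii) for all group homomorphisms f₁ : G →* H₁, f₂ : G →* H₂ and h : H₁ →* H₂ with h.comp f₁ = f₂, one has (β f₂) ∘ h = h ∘ (β f₁) as functions. Then there exists a unique s ∈ G such that for every group H, every homomorphism f : G →* H, and every t ∈ H, one has (β f) t = f s * t * (f s)⁻¹. -/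
/-!
Adjoin to `G` a free generator `x`, so that the conjugates `g x g⁻¹` freely generate the kernel of
the retraction `G * ⟨x⟩ → G` killing `x`. By naturality along this retraction, `β` sends `x` to a
word `w` in these conjugates, and by naturality along `x ↦ t` every `β f t` is the value of `w` at
the elements `f g * t * (f g)⁻¹`. Since `β f` is multiplicative in `t`, testing it on the wreath
products `K ≀ G` shows that `w(k * k') = w(k) * w(k')` for arbitrary families `k, k' : G → K`.
Substituting into a single letter shows that `w` has exponent sum `0` or `1` in it, because no
other power map is an endomorphism of the infinite dihedral group; and at most one exponent sum is
`1`, because the values of `w` on families with disjoint supports commute. Hence `w` is trivial or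
a single letter `s`, and in the latter case `β f t = f s * t * (f s)⁻¹`.
-/

universe u

section MultiplicativeWords

variable {S K : Type*} [Group K]

/-- A word `w` is multiplicative if `w(x * y) = w(x) * w(y)` for the two generic families `x`, `y`
freely generating `FreeGroup (S ⊕ S)`; by `IsMultiplicativeWord.lift_mul` the same then holds for
any two families of elements of any group. -/
def IsMultiplicativeWord (w : FreeGroup S) : Prop :=
  FreeGroup.lift (fun s => .of (.inl s) * .of (.inr s) : S → FreeGroup (S ⊕ S)) w =
    FreeGroup.lift (fun s => .of (.inl s)) w * FreeGroup.lift (fun s => .of (.inr s)) w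

/-- The sum of the exponents with which the letter `s` occurs in the word `w`. -/
def exponentSum [DecidableEq S] (s : S) (w : FreeGroup S) : ℤ :=
  (FreeGroup.lift (Pi.mulSingle s (Multiplicative.ofAdd 1)) w).toAdd

lemma lift_mulSingle [DecidableEq S] (s : S) (a : K) (w : FreeGroup S) :
    FreeGroup.lift (Pi.mulSingle s a) w = a ^ exponentSum s w := by
  suffices h : FreeGroup.lift (Pi.mulSingle s a) = (zpowersHom K a).comp
      (FreeGroup.lift (Pi.mulSingle s (Multiplicative.ofAdd 1))) from DFunLike.congr_fun h w
  ext r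
  by_cases h : r = s
  · subst h
    simp
  · simp [h]

lemma exists_finite_forall_lift_mulIndicator (w : FreeGroup S) :
    ∃ T : Set S, T.Finite ∧ ∀ k : S → K,
      FreeGroup.lift (T.mulIndicator k) w = FreeGroup.lift k w := by
  classical
  refine ⟨{s | s ∈ w.toWord.map Prod.fst}, List.finite_toSet _, fun k => ?_⟩
  rw [← FreeGroup.mk_toWord (x := w), FreeGroup.lift_mk, FreeGroup.lift_mk, FreeGroup.mk_toWord]
  refine congrArg List.prod (List.map_congr_left fun p hp => ?_)
  rw [Set.mulIndicator_of_mem (show p.1 ∈ _ from List.mem_map_of_mem hp)]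

lemma eq_zero_or_eq_one_of_forall_mul_zpow {n : ℤ}
    (h : ∀ a b : DihedralGroup 0, (a * b) ^ n = a ^ n * b ^ n) : n = 0 ∨ n = 1 := by
  have sr_sq (i : ZMod 0) : (DihedralGroup.sr i) ^ (2 : ℤ) = 1 := by
    rw [zpow_two, DihedralGroup.sr_mul_self]
  have h_sr := h (.sr 0) (.sr 1)
  rw [DihedralGroup.sr_mul_sr, sub_zero, DihedralGroup.r_one_zpow] at h_sr
  obtain ⟨c, rfl | rfl⟩ := n.even_or_odd'
  · left
    rw [zpow_mul, zpow_mul, sr_sq, sr_sq, one_zpow, one_mul, DihedralGroup.one_def] at h_sr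
    exact DihedralGroup.r.inj h_sr
  · right
    rw [zpow_add, zpow_add, zpow_mul, zpow_mul, sr_sq, sr_sq, one_zpow, one_mul, one_mul,
      zpow_one, zpow_one, DihedralGroup.sr_mul_sr, sub_zero] at h_sr
    exact DihedralGroup.r.inj h_sr

namespace IsMultiplicativeWord

variable {w : FreeGroup S}

lemma lift_mul (hw : IsMultiplicativeWord w) (k k' : S → K) :
    FreeGroup.lift (k * k') w = FreeGroup.lift k w * FreeGroup.lift k' w := by
  let ev : FreeGroup (S ⊕ S) →* K := FreeGroup.lift (Sum.elim k k')
  have ev_comp (j : S → FreeGroup (S ⊕ S)) :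
      ev (FreeGroup.lift j w) = FreeGroup.lift (fun s => ev (j s)) w :=
    DFunLike.congr_fun (FreeGroup.ext_hom (ev.comp (FreeGroup.lift j)) _ (by simp)) w
  have h := congrArg ev hw
  simp only [map_mul, ev_comp] at h
  simpa [ev, Pi.mul_def] using h

lemma exponentSum_eq_zero_or_one [DecidableEq S] (hw : IsMultiplicativeWord w) (s : S) :
    exponentSum s w = 0 ∨ exponentSum s w = 1 :=
  eq_zero_or_eq_one_of_forall_mul_zpow fun a b => by
    simp only [← lift_mulSingle, Pi.mulSingle_mul, hw.lift_mul]

lemma commute_zpow_exponentSum [DecidableEq S] (hw : IsMultiplicativeWord w) {s r : S}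
    (hsr : s ≠ r) (a b : K) : Commute (a ^ exponentSum s w) (b ^ exponentSum r w) := by
  have h : Commute (Pi.mulSingle s a : S → K) (Pi.mulSingle r b) :=
    Pi.mulSingle_commute (f := fun _ => K) hsr a b
  rw [← lift_mulSingle, ← lift_mulSingle]
  exact h.map (MonoidHom.mk' (FreeGroup.lift · w) hw.lift_mul)

lemma eq_of_exponentSum_eq_one [DecidableEq S] (hw : IsMultiplicativeWord w) {s r : S}
    (hs : exponentSum s w = 1) (hr : exponentSum r w = 1) : s = r := by
  by_contra hsr
  refine DihedralGroup.not_commutative (n := 0) (by decide) (by decide) ⟨⟨fun a b => ?_⟩⟩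
  simpa only [hs, hr, zpow_one] using (hw.commute_zpow_exponentSum hsr a b).eq

lemma lift_congr [DecidableEq S] (hw : IsMultiplicativeWord w) {k k' : S → K}
    (h : ∀ s, k s ^ exponentSum s w = k' s ^ exponentSum s w) :
    FreeGroup.lift k w = FreeGroup.lift k' w := by
  obtain ⟨T, hT, hlift⟩ := exists_finite_forall_lift_mulIndicator (K := K) w
  rw [← hlift k, ← hlift k']
  clear hlift
  induction T, hT using Set.Finite.induction_on with
  | empty => simp only [Set.mulIndicator_empty]
  | @insert s T hs _ ih =>
    have insert_eq_mul (j : S → K) :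
        (insert s T).mulIndicator j = Pi.mulSingle s (j s) * T.mulIndicator j := by
      rw [Set.insert_eq, Set.mulIndicator_union_of_disjoint (Set.disjoint_singleton_left.mpr hs),
        Set.mulIndicator_singleton, Pi.mul_def]
    rw [insert_eq_mul, insert_eq_mul, hw.lift_mul, hw.lift_mul, ih, lift_mulSingle,
      lift_mulSingle, h]

theorem eq_one_or_exists_eq_of (hw : IsMultiplicativeWord w) :
    w = 1 ∨ ∃ s, w = FreeGroup.of s := by
  classical
  rw [← FreeGroup.lift_of_apply w]
  by_cases hzero : ∀ s, exponentSum s w = 0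
  · left
    calc FreeGroup.lift FreeGroup.of w
      _ = FreeGroup.lift (fun _ => 1) w := hw.lift_congr fun s => by simp only [hzero, zpow_zero]
      _ = 1 := by
        rw [show FreeGroup.lift (fun _ : S => (1 : FreeGroup S)) = 1 by ext; simp,
          MonoidHom.one_apply]
  · right
    obtain ⟨s, hs_ne⟩ := not_forall.mp hzero
    have hs : exponentSum s w = 1 := (hw.exponentSum_eq_zero_or_one s).resolve_left hs_ne
    refine ⟨s, ?_⟩
    calc FreeGroup.lift FreeGroup.of w
      _ = FreeGroup.lift (Pi.mulSingle s (FreeGroup.of s)) w := hw.lift_congr fun r => by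
        obtain hr | hr := hw.exponentSum_eq_zero_or_one r
        · rw [hr, zpow_zero, zpow_zero]
        · rw [hw.eq_of_exponentSum_eq_one hr hs, Pi.mulSingle_eq_same]
      _ = FreeGroup.of s := by rw [lift_mulSingle, hs, zpow_one]

end IsMultiplicativeWord

end MultiplicativeWords

section ConjugationWords

variable {G H N : Type*} [Group G] [Group H] [Group N]

/-- The value of a word in letters indexed by `G` when the letter `g` is replaced by the conjugate
`f g * t * (f g)⁻¹`. -/
def conjLift (f : G →* H) (t : H) : FreeGroup G →* H :=
  FreeGroup.lift fun g => f g * t * (f g)⁻¹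

lemma conjLift_of (f : G →* H) (t : H) (g : G) :
    conjLift f t (FreeGroup.of g) = f g * t * (f g)⁻¹ :=
  FreeGroup.lift_apply_of

lemma conjLift_inr_inl (φ : G →* MulAut N) (n : N) (w : FreeGroup G) :
    conjLift (SemidirectProduct.inr : G →* N ⋊[φ] G) (SemidirectProduct.inl n) w =
      SemidirectProduct.inl (FreeGroup.lift (fun g => φ g n) w) := by
  suffices h : conjLift (SemidirectProduct.inr : G →* N ⋊[φ] G) (SemidirectProduct.inl n) =
      SemidirectProduct.inl.comp (FreeGroup.lift fun g => φ g n) from DFunLike.congr_fun h w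
  ext1 g
  simp [conjLift_of, SemidirectProduct.inl_aut]

lemma lift_mulAutArrow_apply_one (k : G → N) (w : FreeGroup G) :
    FreeGroup.lift (fun g => mulAutArrow g k) w 1 = FreeGroup.lift (fun g => k g⁻¹) w := by
  suffices h : (Pi.evalMonoidHom (fun _ : G => N) 1).comp
      (FreeGroup.lift fun g => mulAutArrow g k) = FreeGroup.lift fun g => k g⁻¹ from
    DFunLike.congr_fun h w
  ext1 g
  rw [MonoidHom.comp_apply, FreeGroup.lift_apply_of, FreeGroup.lift_apply_of]
  exact congrArg k (mul_one g⁻¹)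

/- In the wreath product `(G → N) ⋊ G`, the coordinate at `1` of the value of `w` at the conjugates
of a family `k` is the value of `w` at `k` itself, up to inverting the index. -/
lemma isMultiplicativeWord_of_conjLift_mul {G : Type u} [Group G] {w : FreeGroup G}
    (hw : ∀ (H : Type u) [Group H] (f : G →* H) (t t' : H),
      conjLift f (t * t') w = conjLift f t w * conjLift f t' w) :
    IsMultiplicativeWord w := by
  let N := FreeGroup (G ⊕ G)
  let k : G → N := fun g => .of (.inl g⁻¹)
  let k' : G → N := fun g => .of (.inr g⁻¹)
  have h := hw ((G → N) ⋊[mulAutArrow] G) SemidirectProduct.inr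
    (SemidirectProduct.inl k) (SemidirectProduct.inl k')
  rw [← map_mul, conjLift_inr_inl, conjLift_inr_inl, conjLift_inr_inl, ← map_mul] at h
  have h_one := congrFun (SemidirectProduct.inl_injective h) 1
  rw [Pi.mul_apply, lift_mulAutArrow_apply_one, lift_mulAutArrow_apply_one,
    lift_mulAutArrow_apply_one] at h_one
  simpa [k, k', IsMultiplicativeWord] using h_one

end ConjugationWords

section AdjoinFree

variable {G H : Type*} [Group G] [Group H]

/-- The action of `G` on the free group on its underlying set by left translation of letters. -/
def freeTranslation (G : Type*) [Group G] : G →* MulAut (FreeGroup G) where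
  toFun g := FreeGroup.freeGroupCongr (Equiv.mulLeft g)
  map_one' := by ext; simp
  map_mul' a b := by
    refine MulEquiv.toMonoidHom_injective (FreeGroup.ext_hom _ _ fun g => ?_)
    simp [mul_assoc]

lemma freeTranslation_of (g h : G) :
    freeTranslation G g (FreeGroup.of h) = FreeGroup.of (g * h) := by
  simp [freeTranslation]

/-- The free product of `G` with an infinite cyclic group, encoded as the semidirect product of `G`
with the free group on the conjugates of the new generator. -/
abbrev AdjoinFree (G : Type*) [Group G] : Type _ := FreeGroup G ⋊[freeTranslation G] G

namespace AdjoinFree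

/-- The new free generator. -/
def gen : AdjoinFree G := SemidirectProduct.inl (FreeGroup.of 1)

/-- The homomorphism out of `AdjoinFree G` which restricts to `f` on `G` and sends the new
generator to `t`. -/
def eval (f : G →* H) (t : H) : AdjoinFree G →* H :=
  SemidirectProduct.lift (conjLift f t) f fun g => by
    ext h
    simp [conjLift_of, freeTranslation_of, mul_assoc]

lemma eval_inl (f : G →* H) (t : H) (w : FreeGroup G) :
    eval f t (SemidirectProduct.inl w) = conjLift f t w :=
  SemidirectProduct.lift_inl _ _ _ _

lemma eval_gen (f : G →* H) (t : H) : eval f t gen = t := by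
  simp [gen, eval_inl, conjLift_of]

lemma eval_comp_inr (f : G →* H) (t : H) : (eval f t).comp SemidirectProduct.inr = f :=
  SemidirectProduct.lift_comp_inr _ _ _

lemma inr_conj_gen (g : G) :
    SemidirectProduct.inr g * gen * (SemidirectProduct.inr g)⁻¹ =
      (SemidirectProduct.inl (FreeGroup.of g) : AdjoinFree G) := by
  rw [gen, ← map_inv, ← SemidirectProduct.inl_aut, freeTranslation_of, mul_one]

end AdjoinFree

lemma eq_of_forall_conj_eq {G : Type u} [Group G] {s r : G}
    (h : ∀ (H : Type u) [Group H] (f : G →* H) (t : H),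
      f s * t * (f s)⁻¹ = f r * t * (f r)⁻¹) : s = r := by
  have h_gen := h (AdjoinFree G) SemidirectProduct.inr AdjoinFree.gen
  rw [AdjoinFree.inr_conj_gen, AdjoinFree.inr_conj_gen] at h_gen
  exact FreeGroup.of_injective (SemidirectProduct.inl_injective h_gen)

end AdjoinFree

section ExtendedEndomorphisms

variable {G : Type u} [Group G]

/-- A family of endomorphisms `β f` of the codomains of all homomorphisms `f` out of `G` is an
extended endomorphism of `G` if it is natural on the comma category `(G ↓ Group)`. -/
def IsExtendedEndomorphism (β : ∀ (H : Type u) [Group H], (G →* H) → (H →* H)) : Prop :=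
  ∀ (H₁ H₂ : Type u) [Group H₁] [Group H₂] (f₁ : G →* H₁) (f₂ : G →* H₂) (h : H₁ →* H₂),
    h.comp f₁ = f₂ → ∀ t : H₁, β H₂ f₂ (h t) = h (β H₁ f₁ t)

variable {β : ∀ (H : Type u) [Group H], (G →* H) → (H →* H)}

namespace IsExtendedEndomorphism

lemma exists_apply_gen_eq_inl (hβ : IsExtendedEndomorphism β) :
    ∃ w : FreeGroup G,
      β (AdjoinFree G) SemidirectProduct.inr AdjoinFree.gen = SemidirectProduct.inl w := by
  have h := hβ (AdjoinFree G) G SemidirectProduct.inr (MonoidHom.id G)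
    SemidirectProduct.rightHom SemidirectProduct.rightHom_comp_inr AdjoinFree.gen
  rw [AdjoinFree.gen, SemidirectProduct.rightHom_inl, map_one] at h
  have h_range := MonoidHom.mem_ker.mpr h.symm
  rw [← SemidirectProduct.range_inl_eq_ker_rightHom] at h_range
  obtain ⟨w, hw⟩ := h_range
  exact ⟨w, hw.symm⟩

lemma exists_forall_eq_conjLift (hβ : IsExtendedEndomorphism β) :
    ∃ w : FreeGroup G, ∀ (H : Type u) [Group H] (f : G →* H) (t : H),
      β H f t = conjLift f t w := by
  obtain ⟨w, hw⟩ := hβ.exists_apply_gen_eq_inl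
  refine ⟨w, fun H _ f t => ?_⟩
  have h := hβ (AdjoinFree G) H SemidirectProduct.inr f (AdjoinFree.eval f t)
    (AdjoinFree.eval_comp_inr f t) AdjoinFree.gen
  rwa [AdjoinFree.eval_gen, hw, AdjoinFree.eval_inl] at h

end IsExtendedEndomorphism

theorem extended_inner_automorphism_of_group_general (hβ : IsExtendedEndomorphism β) :
    (∀ (H : Type u) [Group H] (f : G →* H) (t : H), β H f t = 1) ∨
      ∃! s : G, ∀ (H : Type u) [Group H] (f : G →* H) (t : H),
        β H f t = f s * t * (f s)⁻¹ := by
  obtain ⟨w, hw⟩ := hβ.exists_forall_eq_conjLift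
  have hw_mul : IsMultiplicativeWord w :=
    isMultiplicativeWord_of_conjLift_mul fun H _ f t t' => by simp only [← hw, map_mul]
  obtain rfl | ⟨s, rfl⟩ := hw_mul.eq_one_or_exists_eq_of
  · exact .inl fun H _ f t => by rw [hw, map_one]
  · have hs (H : Type u) [Group H] (f : G →* H) (t : H) : β H f t = f s * t * (f s)⁻¹ := by
      rw [hw, conjLift_of]
    exact .inr ⟨s, hs, fun r hr => eq_of_forall_conj_eq fun H _ f t => by rw [← hr, ← hs]⟩

end ExtendedEndomorphisms

theorem extended_inner_automorphism_of_group
    (G : Type u) [Group G] (α : G ≃* G)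
    (β : ∀ (H : Type u) [Group H], (G →* H) → (H ≃* H))
    (hid : ∀ t : G, β G (MonoidHom.id G) t = α t)
    (hnat : ∀ (H₁ H₂ : Type u) [Group H₁] [Group H₂]
      (f₁ : G →* H₁) (f₂ : G →* H₂) (h : H₁ →* H₂),
      h.comp f₁ = f₂ → ∀ t : H₁, β H₂ f₂ (h t) = h (β H₁ f₁ t)) :
    ∃! s : G, ∀ (H : Type u) [Group H] (f : G →* H) (t : H),
      β H f t = f s * t * (f s)⁻¹ :=
  (extended_inner_automorphism_of_group_general (β := fun H _ f => (β H f).toMonoidHom)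
    hnat).resolve_left fun h => FreeGroup.of_ne_one (1 : G) <|
      (MulEquiv.map_eq_one_iff _).mp (h (FreeGroup G) 1 (FreeGroup.of 1))
end

section
/- An automorphism α : G ≃* G of a group G in universe u is inner (i.e., there exists s ∈ G with α t = s * t * s⁻¹ for all t ∈ G) if and only if there exists a family assigning to every group H in universe u and every group homomorphism f : G →* H a group automorphism β f : H ≃* H, such that β applied to the identity homomorphism of G equals α as a function, and such that for all group homomorphisms f₁ : G →* H₁, f₂ : G →* H₂ and h : H₁ →* H₂ with h.comp f₁ = f₂, one has (β f₂) ∘ h = h ∘ (β f₁) as functions. -/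
universe u

/-!
Conjugation by `s` extends along `f` as conjugation by `f s`. Conversely, let `β` be an extended
inner automorphism of `G`. Naturality along the inner automorphisms of `H` that fix `f : G →* H`
shows that `β f` moves each `c` centralizing `range f` only by a central factor.

Take `H = G ≀ᵣ Q` with `|Q| = 3` and `f` the embedding of `G` as one factor of the base group. An
element `τ` of `Q` carries this factor to another one, which centralizes it; so
`β f τ * f (α k) * (β f τ)⁻¹` is `k` placed in the other factor, times a central element. The left
side lives in a single factor, and base components of central elements are constant, so a third
factor shows the central element to have trivial base component. Comparing the remaining entries,
`α` is conjugation by the inverse of a base component of `β f τ`.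
-/

open Subgroup RegularWreathProduct

theorem inv_mul_map_mem_center {H : Type*} [Group H] {φ : H →* H} (hφ : Function.Surjective φ)
    {c : H} (hc : ∀ x, φ (c * x * c⁻¹) = c * φ x * c⁻¹) : c⁻¹ * φ c ∈ center H := by
  refine mem_center_iff.mpr fun y => ?_
  obtain ⟨x, rfl⟩ := hφ y
  have h : φ c * φ x * (φ c)⁻¹ = c * φ x * c⁻¹ := by simpa using hc x
  calc φ x * (c⁻¹ * φ c) = c⁻¹ * (c * φ x * c⁻¹) * φ c := by group
    _ = c⁻¹ * (φ c * φ x * (φ c)⁻¹) * φ c := by rw [h]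
    _ = c⁻¹ * φ c * φ x := by group

section ExtendedInner

variable {G : Type u} [Group G]

/-- The compatibility condition making a family `β`, which assigns an automorphism of `H` to every
homomorphism `f : G →* H`, an extended inner automorphism of `G`. -/
def IsExtendedInner (β : ∀ (H : Type u) [Group H], (G →* H) → (H ≃* H)) : Prop :=
  ∀ (H₁ H₂ : Type u) [Group H₁] [Group H₂] (f₁ : G →* H₁) (f₂ : G →* H₂) (h : H₁ →* H₂),
    h.comp f₁ = f₂ → ∀ t : H₁, β H₂ f₂ (h t) = h (β H₁ f₁ t)

theorem isExtendedInner_conj (s : G) :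
    IsExtendedInner fun _ _ f => MulAut.conj (f s) := by
  rintro H₁ H₂ _ _ f₁ f₂ h rfl t
  simp

namespace IsExtendedInner

variable {β : ∀ (H : Type u) [Group H], (G →* H) → (H ≃* H)} {H : Type u} [Group H]

theorem apply_map (hβ : IsExtendedInner β) (f : G →* H) (g : G) :
    β H f (f g) = f (β G (MonoidHom.id G) g) :=
  hβ G H (MonoidHom.id G) f f f.comp_id g

theorem apply_conj (hβ : IsExtendedInner β) {f : G →* H} {c : H} (hc : ∀ g, Commute c (f g))
    (x : H) : β H f (c * x * c⁻¹) = c * β H f x * c⁻¹ := by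
  have conj_comp : (MulAut.conj c).toMonoidHom.comp f = f :=
    MonoidHom.ext fun g => (hc g).mul_inv_cancel
  exact hβ H H f f (MulAut.conj c).toMonoidHom conj_comp x

theorem inv_mul_apply_mem_center (hβ : IsExtendedInner β) {f : G →* H} {c : H}
    (hc : ∀ g, Commute c (f g)) : c⁻¹ * β H f c ∈ center H :=
  inv_mul_map_mem_center (φ := (β H f).toMonoidHom) (β H f).surjective (hβ.apply_conj hc)

end IsExtendedInner

end ExtendedInner

section WreathProduct

variable {D Q : Type*} [Group D] [Group Q]

theorem left_eq_left_of_mem_center {z : D ≀ᵣ Q} (hz : z ∈ center (D ≀ᵣ Q)) (i j : Q) :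
    z.left i = z.left j := by
  have h := congrArg (fun w => w.left i) (mem_center_iff.mp hz (inl (i * j⁻¹)))
  simpa using h.symm

variable [DecidableEq Q]

/-- The embedding of `D` into `D ≀ᵣ Q` as the factor of index `i` of the base group `Q → D`. -/
def baseSingle (i : Q) : D →* D ≀ᵣ Q where
  toFun d := ⟨Pi.mulSingle i d, 1⟩
  map_one' := by ext <;> simp
  map_mul' a b := by ext <;> simp [Pi.mulSingle_mul]

@[simp]
theorem baseSingle_left (i : Q) (d : D) : (baseSingle i d).left = Pi.mulSingle i d := rfl

@[simp]
theorem baseSingle_right (i : Q) (d : D) : (baseSingle i d).right = 1 := rfl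

theorem commute_baseSingle {i j : Q} (hij : i ≠ j) (a b : D) :
    Commute (baseSingle i a) (baseSingle j b) := by
  refine RegularWreathProduct.ext ?_ rfl
  simpa using (Pi.mulSingle_commute (f := fun _ : Q => D) hij a b).eq

theorem conj_baseSingle (w : D ≀ᵣ Q) (i : Q) (d : D) :
    w * baseSingle i d * w⁻¹ =
      baseSingle (w.right * i) (w.left (w.right * i) * d * (w.left (w.right * i))⁻¹) := by
  ext q
  · obtain rfl | hq := eq_or_ne q (w.right * i)
    · simp
    · have hq' : w.right⁻¹ * q ≠ i := fun h => hq (inv_mul_eq_iff_eq_mul.mp h)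
      simp [hq, hq']
  · simp

theorem eq_of_baseSingle_eq_baseSingle_mul (hQ : 3 ≤ ENat.card Q) {i j : Q} {a b : D}
    {z : D ≀ᵣ Q} (hz : z ∈ center (D ≀ᵣ Q)) (h : baseSingle i a = baseSingle j b * z) :
    a = b := by
  have entry (q : Q) : (Pi.mulSingle i a : Q → D) q = (Pi.mulSingle j b : Q → D) q * z.left q := by
    simpa using congrArg (fun w => w.left q) h
  obtain ⟨l, hli, hlj⟩ := ENat.exists_ne_ne_of_three_le hQ i j
  have hzl : z.left l = 1 := by simpa [hli, hlj] using (entry l).symm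
  have hz_left (q : Q) : z.left q = 1 := (left_eq_left_of_mem_center hz q l).trans hzl
  obtain rfl | hij := eq_or_ne i j
  · simpa [hz_left] using entry i
  · have ha : a = 1 := by simpa [hz_left, hij] using entry i
    have hb : b = 1 := by simpa [hz_left, hij.symm] using (entry j).symm
    exact ha.trans hb.symm

theorem exists_conj_of_apply_baseSingle (hQ : 3 ≤ ENat.card Q) {φ : D ≀ᵣ Q →* D ≀ᵣ Q}
    {α : D → D} {i j : Q} (hi : ∀ d, φ (baseSingle i d) = baseSingle i (α d))
    (hj : ∀ d, (baseSingle j d)⁻¹ * φ (baseSingle j d) ∈ center (D ≀ᵣ Q)) :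
    ∃ s : D, ∀ d, α d = s * d * s⁻¹ := by
  set τ : D ≀ᵣ Q := inl (j * i⁻¹)
  set p : D := (φ τ).left ((φ τ).right * i)
  have move (d : D) : τ * baseSingle i d * τ⁻¹ = baseSingle j d := by
    rw [conj_baseSingle]
    simp [τ]
  have image (d : D) : baseSingle ((φ τ).right * i) (p * α d * p⁻¹) = φ (baseSingle j d) := by
    rw [← conj_baseSingle, ← hi, ← move, map_mul, map_mul, map_inv]
  refine ⟨p⁻¹, fun d => ?_⟩
  have hp : p * α d * p⁻¹ = d :=
    eq_of_baseSingle_eq_baseSingle_mul hQ (hj d) ((image d).trans (mul_inv_cancel_left _ _).symm)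
  calc α d = p⁻¹ * (p * α d * p⁻¹) * p⁻¹⁻¹ := by group
    _ = p⁻¹ * d * p⁻¹⁻¹ := by rw [hp]

end WreathProduct

theorem inner_automorphism_iff_extended
    (G : Type u) [Group G] (α : G ≃* G) :
    (∃ s : G, ∀ t : G, α t = s * t * s⁻¹) ↔
      ∃ β : ∀ (H : Type u) [Group H], (G →* H) → (H ≃* H),
        (∀ t : G, β G (MonoidHom.id G) t = α t) ∧
        (∀ (H₁ H₂ : Type u) [Group H₁] [Group H₂]
          (f₁ : G →* H₁) (f₂ : G →* H₂) (h : H₁ →* H₂),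
          h.comp f₁ = f₂ → ∀ t : H₁, β H₂ f₂ (h t) = h (β H₁ f₁ t)) := by
  constructor
  · rintro ⟨s, hs⟩
    exact ⟨fun _ _ f => MulAut.conj (f s), fun t => (hs t).symm, isExtendedInner_conj s⟩
  · rintro ⟨β, hid, hβ : IsExtendedInner β⟩
    let Q := Multiplicative (ZMod 3)
    have card_Q : 3 ≤ ENat.card Q := by simp [Q, ENat.card_eq_coe_fintype_card]
    obtain ⟨j, hj⟩ := exists_ne (1 : Q)
    let f : G →* G ≀ᵣ Q := baseSingle 1
    refine exists_conj_of_apply_baseSingle card_Q (φ := (β (G ≀ᵣ Q) f).toMonoidHom)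
      (i := 1) (j := j) (fun k => ?_) fun k => ?_
    · exact (hβ.apply_map f k).trans (congrArg f (hid k))
    · exact hβ.inv_mul_apply_mem_center fun g => commute_baseSingle hj k g
end

section
/- Let G be a group in universe u, and suppose given, for every group H in universe u and every group homomorphism f : G →* H, a group homomorphism β f : H →* H, such that for all group homomorphisms f₁ : G →* H₁, f₂ : G →* H₂ and h : H₁ →* H₂ with h.comp f₁ = f₂, one has (β f₂).comp h = h.comp (β f₁). Then either every β f is the trivial endomorphism (sending every element of H to 1), or there exists a unique s ∈ G such that for every group H, every f : G →* H, and every t ∈ H, one has (β f) t = f s * t * (f s)⁻¹. -/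
/-!
Let `γ` generate `ℤ`. Embed `G` in `G ≀ᵣ ℤ` as the coordinate at the identity and let `w` be the
value of `β` at `γ` there, with top component `γ ^ n`. For `f : G →* H` and `t : H`, write the
generator `(γ, γ)` of the diagonal of `ℤ × ℤ` as `(γ, 1) * (1, γ)`, and map `G` to the base of
`H ≀ᵣ (ℤ × ℤ)` by suitable conjugates of `f` on the diagonal and trivially off it. The diagonal
meets every coset of the two axes in a single point, so multiplicativity of `β` expresses `β f t`
through `w` alone: it equals `f a * t ^ n * f b` for coordinates `a`, `b` of `w`. Taking `t = 1`
gives `f b = (f a)⁻¹`, and `n` is `0` or `1` because `t ↦ t ^ n` is an endomorphism of the infinite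
dihedral group.
-/

universe u

open RegularWreathProduct

section WreathProduct

variable {G P Q S T : Type*} [Group G] [Group P] [Group Q] [Group S] [Group T]

/-- The homomorphism into the base group of a wreath product with prescribed coordinates. -/
def baseHom (φ : S → (G →* P)) : G →* P ≀ᵣ S where
  toFun g := ⟨fun s => φ s g, 1⟩
  map_one' := by ext <;> simp
  map_mul' _ _ := by ext <;> simp

@[simp]
theorem baseHom_left (φ : S → (G →* P)) (g : G) (s : S) : (baseHom φ g).left s = φ s g := rfl

@[simp]
theorem baseHom_right (φ : S → (G →* P)) (g : G) : (baseHom φ g).right = 1 := rfl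

/-- The family of conjugates `g ↦ (τ s)⁻¹ * f g * τ s` of `f`, used as coordinates for `baseHom`. -/
def conjFamily (τ : S →* P) (f : G →* P) (s : S) : G →* P :=
  (MulAut.conj (τ s)⁻¹).toMonoidHom.comp f

@[simp]
theorem conjFamily_apply (τ : S →* P) (f : G →* P) (s : S) (g : G) :
    conjFamily τ f s g = (τ s)⁻¹ * f g * τ s := by
  simp [conjFamily]

/-- Coordinates on `S × S` for `baseHom`: `conjFamily τ f` on the diagonal and trivial off it. -/
def diagonalConjFamily [DecidableEq S] (τ : S →* P) (f : G →* P) (q : S × S) : G →* P :=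
  if q.1 = q.2 then conjFamily τ f q.1 else 1

/-- The embedding `h ↦ (s ↦ (τ s)⁻¹ * h * τ s)` of `P` in the base group of `P ≀ᵣ S`, extended to
`P × S` so that `(τ s, s)` goes to the element `s` of the top group. -/
def twistedDiagonal (τ : S →* P) : P × S →* P ≀ᵣ S where
  toFun a := ⟨fun s => (τ s)⁻¹ * a.1 * τ (a.2⁻¹ * s), a.2⟩
  map_one' := by ext <;> simp
  map_mul' _ _ := by ext <;> simp [mul_assoc]

/-- The relation between `P ≀ᵣ T` and `Q ≀ᵣ S` saying that the top components correspond under `ξ`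
and the coordinates on the coset `ξ.range * c` come from those over `S` through `p`. It stands in
for a restriction homomorphism, which is not defined on all of `P ≀ᵣ T`. -/
def cosetRelation (ξ : S →* T) (c : T) (p : Q →* P) : Subgroup ((P ≀ᵣ T) × (Q ≀ᵣ S)) where
  carrier := {a | a.1.right = ξ a.2.right ∧ ∀ s, a.1.left (ξ s * c) = p (a.2.left s)}
  one_mem' := by simp
  mul_mem' := by
    rintro a b ⟨ha, ha'⟩ ⟨hb, hb'⟩
    exact ⟨by simp [ha, hb], fun s => by simp [ha, ha', ← hb', ← mul_assoc]⟩
  inv_mem' := by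
    rintro a ⟨ha, ha'⟩
    exact ⟨by simp [ha], fun s => by simp [ha, ← ha', ← mul_assoc]⟩

end WreathProduct

theorem eq_zero_or_one_of_dihedral_mul_zpow {n : ℤ}
    (h : (.sr 0 * .sr 1 : DihedralGroup 0) ^ n = .sr 0 ^ n * .sr 1 ^ n) : n = 0 ∨ n = 1 := by
  have hsq (i : ZMod 0) : (.sr i : DihedralGroup 0) ^ (2 : ℤ) = 1 := by
    rw [zpow_two, DihedralGroup.sr_mul_self]
  rw [DihedralGroup.sr_mul_sr, sub_zero, DihedralGroup.r_one_zpow] at h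
  rcases n.even_or_odd' with ⟨k, rfl | rfl⟩
  · rw [zpow_mul, zpow_mul, hsq, hsq, one_zpow, one_mul, DihedralGroup.one_def] at h
    exact .inl (DihedralGroup.r.inj h)
  · rw [zpow_add_one, zpow_add_one, zpow_mul, zpow_mul, hsq, hsq, one_zpow, one_mul, one_mul,
      DihedralGroup.sr_mul_sr, sub_zero] at h
    exact .inr (DihedralGroup.r.inj h)

/-- The compatibility condition of an extended inner endomorphism of `G`. -/
def IsExtendedInnerEndomorphism {G : Type u} [Group G]
    (β : ∀ (H : Type u) [Group H], (G →* H) → (H →* H)) : Prop :=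
  ∀ (H₁ H₂ : Type u) [Group H₁] [Group H₂] (f₁ : G →* H₁) (f₂ : G →* H₂) (h : H₁ →* H₂),
    h.comp f₁ = f₂ → (β H₂ f₂).comp h = h.comp (β H₁ f₁)

namespace IsExtendedInnerEndomorphism

variable {G : Type u} [Group G]

/-- The value of `β` on a generator of the top group of `G ≀ᵣ ℤ`, where `G` is embedded as the
coordinate at the identity. Its coordinates and `exponent β` determine `β`. -/
def universalValue (β : ∀ (H : Type u) [Group H], (G →* H) → (H →* H)) :
    G ≀ᵣ Multiplicative ℤ :=
  β _ (baseHom (Pi.mulSingle 1 (MonoidHom.id G))) (inl (.ofAdd 1))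

/-- The integer `n` such that `β` is `t ↦ t ^ n` on trivial homomorphisms. -/
def exponent (β : ∀ (H : Type u) [Group H], (G →* H) → (H →* H)) : ℤ :=
  (universalValue β).right.toAdd

variable {β : ∀ (H : Type u) [Group H], (G →* H) → (H →* H)}
variable {H H₁ H₂ P Q : Type u} [Group H] [Group H₁] [Group H₂] [Group P] [Group Q]
-- `S` and `T` live in `Type` so that `P ≀ᵣ S` stays in `Type u`, where `β` is defined.
variable {S T : Type} [Group S] [Group T]

theorem map_apply (hβ : IsExtendedInnerEndomorphism β) (f : G →* H₁) (h : H₁ →* H₂) (t : H₁) :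
    h (β H₁ f t) = β H₂ (h.comp f) (h t) :=
  (DFunLike.congr_fun (hβ H₁ H₂ f _ h rfl) t).symm

theorem apply_mem_of_forall_mem (hβ : IsExtendedInnerEndomorphism β) (R : Subgroup (H₁ × H₂))
    {f₁ : G →* H₁} {f₂ : G →* H₂} (hf : ∀ g, (f₁ g, f₂ g) ∈ R) {t₁ : H₁} {t₂ : H₂}
    (ht : (t₁, t₂) ∈ R) : (β H₁ f₁ t₁, β H₂ f₂ t₂) ∈ R := by
  let f : G →* R := (f₁.prod f₂).codRestrict R hf
  have hfst := hβ.map_apply f ((MonoidHom.fst H₁ H₂).comp R.subtype) ⟨_, ht⟩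
  have hsnd := hβ.map_apply f ((MonoidHom.snd H₁ H₂).comp R.subtype) ⟨_, ht⟩
  have hpair : (β R f ⟨_, ht⟩ : H₁ × H₂) = (β H₁ f₁ t₁, β H₂ f₂ t₂) := Prod.ext hfst hsnd
  exact hpair ▸ (β R f ⟨_, ht⟩).2

theorem map_apply_of_comp_eq_one (hβ : IsExtendedInnerEndomorphism β) {K : Type*} [Group K]
    {f : G →* H} {π : H →* K} (hπ : π.comp f = 1) (t : H) :
    π (β H f t) = π t ^ exponent β := by
  let R : Subgroup (H × (G ≀ᵣ Multiplicative ℤ)) :=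
    (π.comp (MonoidHom.fst _ _)).eqLocus
      ((zpowersHom K (π t)).comp (rightHom.comp (MonoidHom.snd _ _)))
  have hbase (g : G) : (f g, baseHom (Pi.mulSingle 1 (MonoidHom.id G)) g) ∈ R :=
    show π (f g) = π t ^ (0 : ℤ) by simpa using DFunLike.congr_fun hπ g
  have htop : (t, inl (.ofAdd 1)) ∈ R := (zpow_one (π t)).symm
  exact hβ.apply_mem_of_forall_mem R hbase htop

theorem exponent_eq_zero_or_one (hβ : IsExtendedInnerEndomorphism β) :
    exponent β = 0 ∨ exponent β = 1 := by
  let π : ULift.{u} (DihedralGroup 0) →* DihedralGroup 0 := MulEquiv.ulift.toMonoidHom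
  have hpow (t : ULift.{u} (DihedralGroup 0)) : π (β _ 1 t) = π t ^ exponent β :=
    hβ.map_apply_of_comp_eq_one (by simp) t
  have hmul := congrArg π ((β _ 1).map_mul ⟨.sr 0⟩ ⟨.sr 1⟩)
  rw [hpow, map_mul, map_mul, hpow, hpow] at hmul
  exact eq_zero_or_one_of_dihedral_mul_zpow hmul

theorem apply_baseHom_inl_right (hβ : IsExtendedInnerEndomorphism β) (φ : S → (G →* P)) (s : S) :
    (β _ (baseHom φ) (inl s)).right = s ^ exponent β :=
  hβ.map_apply_of_comp_eq_one (π := rightHom) (by ext; simp) (inl s)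

theorem apply_baseHom_inl_left_of_comp_eq (hβ : IsExtendedInnerEndomorphism β) {φ : T → (G →* P)}
    {ψ : S → (G →* Q)} (ξ : S →* T) (c : T) (p : Q →* P)
    (h : ∀ s, φ (ξ s * c) = p.comp (ψ s)) (r s : S) :
    (β _ (baseHom φ) (inl (ξ r))).left (ξ s * c) = p ((β _ (baseHom ψ) (inl r)).left s) :=
  (hβ.apply_mem_of_forall_mem (cosetRelation ξ c p)
    (fun g => ⟨by simp, fun s => by simp [h]⟩) ⟨by simp, by simp⟩).2 s

theorem apply_baseHom_inl_left_of_single (hβ : IsExtendedInnerEndomorphism β) {φ : T → (G →* P)}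
    (ξ : Multiplicative ℤ →* T) (c : T) (f : G →* P) (hone : φ c = f)
    (hne : ∀ s ≠ 1, φ (ξ s * c) = 1) (s : Multiplicative ℤ) :
    (β _ (baseHom φ) (inl (ξ (.ofAdd 1)))).left (ξ s * c) = f ((universalValue β).left s) := by
  refine hβ.apply_baseHom_inl_left_of_comp_eq ξ c f (fun r => ?_) _ s
  by_cases hr : r = 1
  · simp [hr, hone]
  · simp [hr, hne]

theorem apply_baseHom_conjFamily_inl_left (hβ : IsExtendedInnerEndomorphism β) (τ : S →* P)
    (f : G →* P) (s : S) :
    (β _ (baseHom (conjFamily τ f)) (inl s)).left 1 = β P f (τ s) * (τ s ^ exponent β)⁻¹ := by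
  have hbase : (twistedDiagonal τ).comp (f.prod 1) = baseHom (conjFamily τ f) := by
    ext g <;> simp [twistedDiagonal]
  have htop : twistedDiagonal τ (τ s, s) = inl s := by
    ext <;> simp [twistedDiagonal]
  have hvalue : β (P × S) (f.prod 1) (τ s, s) = (β P f (τ s), s ^ exponent β) :=
    Prod.ext (hβ.map_apply (f.prod 1) (MonoidHom.fst P S) (τ s, s))
      (hβ.map_apply_of_comp_eq_one (π := MonoidHom.snd P S) (by ext; simp) (τ s, s))
  rw [← hbase, ← htop, ← hβ.map_apply, hvalue]
  simp [twistedDiagonal]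

theorem apply_diagonalConjFamily_inl_diag_left (hβ : IsExtendedInnerEndomorphism β)
    [DecidableEq S] (τ : S →* P) (f : G →* P) (s : S) :
    (β _ (baseHom (diagonalConjFamily τ f)) (inl (s, s))).left 1 =
      β P f (τ s) * (τ s ^ exponent β)⁻¹ := by
  rw [← hβ.apply_baseHom_conjFamily_inl_left]
  simpa [Prod.mk_one_one] using hβ.apply_baseHom_inl_left_of_comp_eq (φ := diagonalConjFamily τ f)
    (ψ := conjFamily τ f) ((MonoidHom.id S).prod (MonoidHom.id S)) 1
    (MonoidHom.id P) (fun r => by simp [diagonalConjFamily]) s 1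

theorem apply_diagonalConjFamily_inl_fst_left (hβ : IsExtendedInnerEndomorphism β)
    (τ : Multiplicative ℤ →* P) (f : G →* P) :
    (β _ (baseHom (diagonalConjFamily τ f)) (inl (.ofAdd 1, 1))).left 1 =
      f ((universalValue β).left 1) :=
  hβ.apply_baseHom_inl_left_of_single (φ := diagonalConjFamily τ f) (MonoidHom.inl _ _) 1 f
    (by ext; simp [diagonalConjFamily]) (fun s hs => by simp [diagonalConjFamily, hs]) 1

theorem apply_diagonalConjFamily_inl_snd_left (hβ : IsExtendedInnerEndomorphism β)
    (τ : Multiplicative ℤ →* P) (f : G →* P) (s : Multiplicative ℤ) :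
    (β _ (baseHom (diagonalConjFamily τ f)) (inl (1, .ofAdd 1))).left (s⁻¹, 1) =
      τ s * f ((universalValue β).left s) * (τ s)⁻¹ := by
  have hcoset := hβ.apply_baseHom_inl_left_of_single (φ := diagonalConjFamily τ f)
    (MonoidHom.inr _ _) (s⁻¹, s⁻¹) _ rfl (fun r hr => by simp [diagonalConjFamily, hr]) s
  simpa [diagonalConjFamily] using hcoset

theorem apply_eq_mul_zpow_mul (hβ : IsExtendedInnerEndomorphism β) (f : G →* H) (t : H) :
    β H f t = f ((universalValue β).left 1) * t ^ exponent β *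
      f ((universalValue β).left (universalValue β).right) := by
  let γ : Multiplicative ℤ := .ofAdd 1
  let τ : Multiplicative ℤ →* H := zpowersHom H t
  let b := β _ (baseHom (diagonalConjFamily τ f))
  have hγ : τ γ = t := zpow_one t
  have hright : (b (inl (γ, 1))).right = (γ ^ exponent β, 1) := by
    simpa using hβ.apply_baseHom_inl_right (diagonalConjFamily τ f) (γ, 1)
  have hmul : (b (inl (γ, γ))).left 1 =
      (b (inl (γ, 1))).left 1 * (b (inl (1, γ))).left ((γ ^ exponent β)⁻¹, 1) := by
    have hsplit : (inl (γ, γ) : H ≀ᵣ _) = inl (γ, 1) * inl (1, γ) := by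
      simp [← map_mul]
    simp [hsplit, hright]
  rw [hβ.apply_diagonalConjFamily_inl_diag_left, hβ.apply_diagonalConjFamily_inl_fst_left,
    hβ.apply_diagonalConjFamily_inl_snd_left, map_zpow, hγ, ← mul_assoc, ← mul_assoc] at hmul
  rw [show (universalValue β).right = γ ^ exponent β from hβ.apply_baseHom_inl_right _ γ]
  exact mul_right_cancel hmul

theorem apply_eq_conj_zpow (hβ : IsExtendedInnerEndomorphism β) (f : G →* H) (t : H) :
    β H f t = f ((universalValue β).left 1) * t ^ exponent β *
      (f ((universalValue β).left 1))⁻¹ := by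
  have hone := hβ.apply_eq_mul_zpow_mul f 1
  rw [map_one, one_zpow, mul_one] at hone
  rw [hβ.apply_eq_mul_zpow_mul, eq_inv_of_mul_eq_one_right hone.symm]

theorem universalValue_left_one_of_apply_eq {s : G}
    (hs : ∀ (H : Type u) [Group H] (f : G →* H) (t : H), β H f t = f s * t * (f s)⁻¹) :
    (universalValue β).left 1 = s := by
  rw [universalValue, hs]
  simp

end IsExtendedInnerEndomorphism

theorem extended_inner_endomorphism_of_group
    (G : Type u) [Group G]
    (β : ∀ (H : Type u) [Group H], (G →* H) → (H →* H))
    (hnat : ∀ (H₁ H₂ : Type u) [Group H₁] [Group H₂]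
      (f₁ : G →* H₁) (f₂ : G →* H₂) (h : H₁ →* H₂),
      h.comp f₁ = f₂ → (β H₂ f₂).comp h = h.comp (β H₁ f₁)) :
    (∀ (H : Type u) [Group H] (f : G →* H) (t : H), β H f t = 1) ∨
      ∃! s : G, ∀ (H : Type u) [Group H] (f : G →* H) (t : H),
        β H f t = f s * t * (f s)⁻¹ := by
  have hβ : IsExtendedInnerEndomorphism β := hnat
  rcases hβ.exponent_eq_zero_or_one with hzero | hone
  · exact .inl fun H _ f t => by simp [hβ.apply_eq_conj_zpow, hzero]
  · refine .inr ⟨(IsExtendedInnerEndomorphism.universalValue β).left 1,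
      fun H _ f t => ?_, fun s hs => ?_⟩
    · rw [hβ.apply_eq_conj_zpow, hone, zpow_one]
    · exact (IsExtendedInnerEndomorphism.universalValue_left_one_of_apply_eq hs).symm
end

section
/- Let K be a field and R a nonzero associative unital K-algebra. Let (β f) be an extended inner endomorphism of R such that every β f is bijective (an extended inner automorphism). Then there exists a unit a ∈ Rˣ such that for every K-algebra S, every K-algebra homomorphism f : R →ₐ[K] S, and every t ∈ S, one has (β f) t = f a * t * f (a⁻¹); moreover, a is unique up to a scalar factor: if a' ∈ Rˣ is another unit with this property, then there exists a unit c ∈ Kˣ with a' = algebraMap K R c * a. -/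
universe u v

/-!
Write `w ∈ R ⊗ R` for the value of `β` on the generator of the trivial square-zero extension of `R`
by the free bimodule `R ⊗ R`. By naturality, `β f t` is obtained by substituting `t` for the tensor
sign in `w` whenever `t * f r * t = 0` for all `r`. Operators of rank one on `R × S` that carry the
first factor to the second are such elements `t`. Evaluating `β` at those made from a functional `l`
on `R` shows that the contraction `a` of `w` with `l` satisfies `β f t * f a = f a * t` for all `f`
and `t`. Some contraction is nonzero: if `w = 0`, then `β` kills an off-diagonal matrix unit and
hence `1`. A nonzero `a` of this kind is left invertible: otherwise evaluate `β` at the operator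
made from a functional that vanishes on `R a` but not at `1`. Surjectivity of `β (id R)` turns the
left inverse into a two-sided one. Uniqueness holds because the centre of `End_K R` is `K`.
-/

open scoped TensorProduct

section Tensor

variable {K R S : Type*} [CommRing K] [Ring R] [Algebra K R] [Ring S] [Algebra K S]

/-- The linear map `R ⊗ R → S` given by `r ⊗ r' ↦ f r * t * f r'`. -/
noncomputable def sandwich (f : R →ₐ[K] S) (t : S) : R ⊗[K] R →ₗ[K] S :=
  LinearMap.mul' K S ∘ₗ TensorProduct.map (LinearMap.mulRight K t ∘ₗ f.toLinearMap) f.toLinearMap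

@[simp]
theorem sandwich_tmul (f : R →ₐ[K] S) (t : S) (r r' : R) :
    sandwich f t (r ⊗ₜ r') = f r * t * f r' := rfl

theorem sandwich_tmul_one_mul (f : R →ₐ[K] S) (t : S) (r : R) (w : R ⊗[K] R) :
    sandwich f t ((r ⊗ₜ 1) * w) = f r * sandwich f t w := by
  induction w with
  | zero => simp only [mul_zero, map_zero]
  | add x y hx hy => simp only [mul_add, map_add, hx, hy]
  | tmul => simp [mul_assoc]

theorem sandwich_mul_one_tmul (f : R →ₐ[K] S) (t : S) (r : R) (w : R ⊗[K] R) :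
    sandwich f t (w * (1 ⊗ₜ r)) = sandwich f t w * f r := by
  induction w with
  | zero => simp only [zero_mul, map_zero]
  | add x y hx hy => simp only [add_mul, map_add, hx, hy]
  | tmul => simp [mul_assoc]

theorem sandwich_mul_sandwich {f : R →ₐ[K] S} {t : S} (ht : ∀ r, t * f r * t = 0)
    (w w' : R ⊗[K] R) : sandwich f t w * sandwich f t w' = 0 := by
  induction w with
  | zero => rw [map_zero, zero_mul]
  | add x y hx hy => rw [map_add, add_mul, hx, hy, add_zero]
  | tmul r₁ r₂ =>
    induction w' with
    | zero => rw [map_zero, mul_zero]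
    | add x y hx hy => rw [map_add, mul_add, hx, hy, add_zero]
    | tmul r₃ r₄ =>
      calc f r₁ * t * f r₂ * (f r₃ * t * f r₄) = f r₁ * (t * f (r₂ * r₃) * t) * f r₄ := by
            simp only [map_mul, mul_assoc]
        _ = 0 := by rw [ht, mul_zero, zero_mul]

/-- Contraction of the second factor of `R ⊗ R` with a linear functional. -/
noncomputable def contractSnd (l : R →ₗ[K] K) : R ⊗[K] R →ₗ[K] R :=
  (TensorProduct.rid K R).toLinearMap ∘ₗ l.lTensor R

@[simp]
theorem contractSnd_tmul (l : R →ₗ[K] K) (r r' : R) : contractSnd l (r ⊗ₜ r') = l r' • r := by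
  simp [contractSnd]

theorem exists_contractSnd_ne_zero [Module.Free K R] {w : R ⊗[K] R} (hw : w ≠ 0) :
    ∃ l : R →ₗ[K] K, contractSnd l w ≠ 0 := by
  classical
  let b := Module.Free.chooseBasis K R
  by_contra! h
  refine hw ((TensorProduct.equivFinsuppOfBasisRight b).map_eq_zero_iff.mp ?_)
  ext i
  rw [TensorProduct.equivFinsuppOfBasisRight_apply]
  exact h (b.coord i)

end Tensor

section FreeBimodule

variable (K R : Type*) [CommRing K] [Ring R] [Algebra K R]

/-- The free `R`-bimodule on one generator: `R ⊗ R`, on which `R` acts from the left through the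
first factor and from the right through the second. It is a type synonym because the instances on
`R ⊗ R` itself let `Rᵐᵒᵖ` act through the first factor. -/
def FreeBimodule : Type _ := R ⊗[K] R

namespace FreeBimodule

noncomputable instance : AddCommGroup (FreeBimodule K R) :=
  inferInstanceAs (AddCommGroup (R ⊗[K] R))

noncomputable instance : Module K (FreeBimodule K R) :=
  inferInstanceAs (Module K (R ⊗[K] R))

noncomputable instance : Module R (FreeBimodule K R) :=
  Module.compHom (R ⊗[K] R)
    (Algebra.TensorProduct.includeLeft : R →ₐ[K] R ⊗[K] R).toRingHom

noncomputable instance : Module Rᵐᵒᵖ (FreeBimodule K R) :=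
  Module.compHom (R ⊗[K] R)
    (Algebra.TensorProduct.includeRight : R →ₐ[K] R ⊗[K] R).toRingHom.op

/-- The tensor underlying an element of the free bimodule. -/
noncomputable def toTensor : FreeBimodule K R ≃ₗ[K] R ⊗[K] R := LinearEquiv.refl K (R ⊗[K] R)

variable {K R}

theorem toTensor_smul (r : R) (m : FreeBimodule K R) :
    toTensor K R (r • m) = (r ⊗ₜ 1) * toTensor K R m := rfl

theorem toTensor_op_smul (r : Rᵐᵒᵖ) (m : FreeBimodule K R) :
    toTensor K R (r • m) = toTensor K R m * (1 ⊗ₜ r.unop) := rfl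

instance : SMulCommClass R Rᵐᵒᵖ (FreeBimodule K R) where
  smul_comm r r' m := (toTensor K R).injective <| by
    simp only [toTensor_smul, toTensor_op_smul, mul_assoc]

instance : IsScalarTower K R (FreeBimodule K R) where
  smul_assoc k r m := (toTensor K R).injective <| by
    simp only [map_smul, toTensor_smul, ← TensorProduct.smul_tmul', smul_mul_assoc]

instance : IsScalarTower K Rᵐᵒᵖ (FreeBimodule K R) where
  smul_assoc k r m := (toTensor K R).injective <| by
    simp only [map_smul, toTensor_op_smul, MulOpposite.unop_smul, TensorProduct.tmul_smul,
      mul_smul_comm]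

variable {S : Type*} [Ring S] [Algebra K S]

/-- The homomorphism from the trivial square-zero extension of `R` by its free bimodule that
extends `f` and sends the generator `1 ⊗ 1` to `t`. -/
noncomputable def liftSquareZero (f : R →ₐ[K] S) (t : S) (ht : ∀ r, t * f r * t = 0) :
    TrivSqZeroExt R (FreeBimodule K R) →ₐ[K] S :=
  TrivSqZeroExt.lift f (sandwich f t ∘ₗ (toTensor K R).toLinearMap)
    (fun m m' => sandwich_mul_sandwich ht (toTensor K R m) (toTensor K R m'))
    (fun r m => sandwich_tmul_one_mul f t r (toTensor K R m))
    (fun r m => sandwich_mul_one_tmul f t r (toTensor K R m))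

theorem liftSquareZero_inr (f : R →ₐ[K] S) (t : S) (ht : ∀ r, t * f r * t = 0)
    (m : FreeBimodule K R) :
    liftSquareZero f t ht (TrivSqZeroExt.inr m) = sandwich f t (toTensor K R m) :=
  TrivSqZeroExt.lift_apply_inr ..

end FreeBimodule

end FreeBimodule

section Corner

variable {K R S : Type*} [CommRing K] [Ring R] [Algebra K R] [Ring S] [Algebra K S]

/-- The left multiplication action of `R` on `R × S`, through `f` on the second factor. -/
noncomputable def prodLmul (f : R →ₐ[K] S) : R →ₐ[K] Module.End K (R × S) :=
  (Algebra.lmul K (R × S)).comp ((AlgHom.id K R).prod f)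

@[simp]
theorem prodLmul_apply (f : R →ₐ[K] S) (r : R) (p : R × S) :
    prodLmul f r p = (r * p.1, f r * p.2) := rfl

/-- The endomorphism of `R × S` carrying the first factor to the second by `g` and killing the
second. -/
def corner (g : R →ₗ[K] S) : Module.End K (R × S) :=
  LinearMap.inr K R S ∘ₗ g ∘ₗ LinearMap.fst K R S

@[simp]
theorem corner_apply (g : R →ₗ[K] S) (p : R × S) : corner g p = (0, g p.1) := rfl

theorem corner_mul_prodLmul_mul_corner (f : R →ₐ[K] S) (g : R →ₗ[K] S) (r : R) :
    corner g * prodLmul f r * corner g = 0 :=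
  LinearMap.ext fun p => by simp [Module.End.mul_apply]

theorem sandwich_corner_apply (f : R →ₐ[K] S) (l : R →ₗ[K] K) (s : S) (w : R ⊗[K] R) (z : R) :
    sandwich (prodLmul f) (corner (l.smulRight s)) w (z, 0) =
      (0, f (contractSnd (l ∘ₗ LinearMap.mulRight K z) w) * s) := by
  induction w with
  | zero => simp only [map_zero, zero_mul, LinearMap.zero_apply, Prod.mk_zero_zero]
  | add x y hx hy => simp [hx, hy, add_mul]
  | tmul => simp [Module.End.mul_apply]

end Corner

theorem exists_algebraMap_eq_of_commute_lmul {K R : Type*} [CommRing K] [Ring R] [Algebra K R]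
    [Module.Free K R] {u : R} (hu : ∀ t : Module.End K R, Commute t (Algebra.lmul K R u)) :
    ∃ c : K, algebraMap K R c = u := by
  have mem_center : Algebra.lmul K R u ∈ Subalgebra.center K (Module.End K R) :=
    Subalgebra.mem_center_iff.mpr hu
  rw [Algebra.IsCentral.center_eq_bot, Algebra.mem_bot] at mem_center
  obtain ⟨c, hc⟩ := mem_center
  refine ⟨c, ?_⟩
  simpa [Algebra.algebraMap_eq_smul_one] using LinearMap.congr_fun hc 1

/-- An extended inner endomorphism of the `K`-algebra `R`: an endomorphism of every `K`-algebra
under `R`, natural with respect to homomorphisms under `R`. -/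
structure ExtendedInnerEndomorphism (K : Type v) [CommRing K] (R : Type u) [Ring R]
    [Algebra K R] where
  app (S : Type u) [Ring S] [Algebra K S] (f : R →ₐ[K] S) : S →ₐ[K] S
  naturality (S₁ S₂ : Type u) [Ring S₁] [Algebra K S₁] [Ring S₂] [Algebra K S₂]
    (f₁ : R →ₐ[K] S₁) (f₂ : R →ₐ[K] S₂) (h : S₁ →ₐ[K] S₂) (comp_eq : h.comp f₁ = f₂) :
    (app S₂ f₂).comp h = h.comp (app S₁ f₁)

namespace ExtendedInnerEndomorphism

section CommRing

variable {K : Type v} [CommRing K] {R : Type u} [Ring R] [Algebra K R]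
  (β : ExtendedInnerEndomorphism K R) {S S₁ S₂ : Type u} [Ring S] [Algebra K S]
  [Ring S₁] [Algebra K S₁] [Ring S₂] [Algebra K S₂]

theorem app_map {f₁ : R →ₐ[K] S₁} {f₂ : R →ₐ[K] S₂} (h : S₁ →ₐ[K] S₂) (comp_eq : h.comp f₁ = f₂)
    (t : S₁) : β.app S₂ f₂ (h t) = h (β.app S₁ f₁ t) :=
  DFunLike.congr_fun (β.naturality S₁ S₂ f₁ f₂ h comp_eq) t

open TrivSqZeroExt in
/-- The tensor in `R ⊗ R` that describes `β` on square-zero elements: the value of `β` at the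
generator of the trivial square-zero extension of `R` by its free bimodule. -/
noncomputable def coeff : R ⊗[K] R :=
  FreeBimodule.toTensor K R (β.app (TrivSqZeroExt R (FreeBimodule K R)) (inlAlgHom K R _)
    (inr ((FreeBimodule.toTensor K R).symm (1 ⊗ₜ 1)))).snd

open TrivSqZeroExt in
theorem app_eq_sandwich_coeff (f : R →ₐ[K] S) {t : S} (ht : ∀ r, t * f r * t = 0) :
    β.app S f t = sandwich f t β.coeff := by
  let g : FreeBimodule K R := (FreeBimodule.toTensor K R).symm (1 ⊗ₜ 1)
  let x : TrivSqZeroExt R (FreeBimodule K R) := β.app _ (inlAlgHom K R _) (inr g)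
  have fst_x : x.fst = 0 := by
    have retraction : (fstHom K R (FreeBimodule K R)).comp (inlAlgHom K R _) = AlgHom.id K R := rfl
    exact (β.app_map _ retraction (inr g)).symm.trans (map_zero _)
  have lift_g : FreeBimodule.liftSquareZero f t ht (inr g) = t := by
    simp [FreeBimodule.liftSquareZero_inr, g]
  calc β.app S f t = FreeBimodule.liftSquareZero f t ht x := by
        rw [← β.app_map _ (lift_comp_inlHom ..), lift_g]
    _ = FreeBimodule.liftSquareZero f t ht (inr x.snd) := by
        rw [← inl_fst_add_inr_snd_eq x, fst_x, inl_zero, zero_add, snd_inr]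
    _ = sandwich f t β.coeff := FreeBimodule.liftSquareZero_inr ..

theorem coeff_ne_zero [Nontrivial R] : β.coeff ≠ 0 := by
  intro h
  let f := prodLmul (AlgHom.id K R)
  let p : Module.End K (R × R) := corner LinearMap.id
  let q : Module.End K (R × R) := LinearMap.inl K R R ∘ₗ LinearMap.snd K R R
  have app_p : β.app _ f p = 0 := by
    rw [β.app_eq_sandwich_coeff f (corner_mul_prodLmul_mul_corner _ _), h, map_zero]
  have one_eq : 1 = p * q + q * p :=
    LinearMap.ext fun z => by simp [p, q, Module.End.mul_apply]
  have one_eq_zero : (1 : Module.End K (R × R)) = 0 := by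
    rw [← map_one (β.app _ f), one_eq, map_add, map_mul, map_mul, app_p, zero_mul, mul_zero,
      add_zero]
  exact one_ne_zero one_eq_zero

theorem app_corner_apply (f : R →ₐ[K] S) (l : R →ₗ[K] K) (s : S) (z : R) :
    β.app _ (prodLmul f) (corner (l.smulRight s)) (z, 0) =
      (0, f (contractSnd (l ∘ₗ LinearMap.mulRight K z) β.coeff) * s) := by
  rw [β.app_eq_sandwich_coeff (prodLmul f) (corner_mul_prodLmul_mul_corner f (l.smulRight s)),
    sandwich_corner_apply]

/-- The elements `a` with `β f t * f a = f a * t` for all `f` and `t`; a unit has this property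
exactly when `β` is conjugation by it. -/
def IsIntertwiner (a : R) : Prop :=
  ∀ (S : Type u) [Ring S] [Algebra K S] (f : R →ₐ[K] S) (t : S), β.app S f t * f a = f a * t

theorem isIntertwiner_contractSnd_coeff (l : R →ₗ[K] K) :
    β.IsIntertwiner (contractSnd l β.coeff) := by
  intro S _ _ f t
  let a := contractSnd l β.coeff
  let y (s : S) : Module.End K (R × S) := corner (l.smulRight s)
  have app_y (s : S) : β.app _ (prodLmul f) (y s) (1, 0) = (0, f a * s) := by
    rw [β.app_corner_apply, LinearMap.mulRight_one, LinearMap.comp_id]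
  have y_eq : y t = Algebra.lmul K (R × S) (0, t) * y 1 :=
    LinearMap.ext fun p => by simp [y, Module.End.mul_apply]
  have app_lmul : β.app _ (prodLmul f) (Algebra.lmul K (R × S) (0, t)) =
      Algebra.lmul K (R × S) (β.app _ ((AlgHom.id K R).prod f) (0, t)) := β.app_map _ rfl _
  have snd_app : (β.app _ ((AlgHom.id K R).prod f) (0, t)).2 = β.app S f t :=
    (β.app_map (AlgHom.snd K R S) rfl (0, t)).symm
  have h := app_y t
  rw [y_eq, map_mul, app_lmul, Module.End.mul_apply, app_y, mul_one] at h
  rw [← snd_app]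
  exact congrArg Prod.snd h

variable {β}

theorem isIntertwiner_units_iff {a : Rˣ} :
    β.IsIntertwiner a ↔ ∀ (S : Type u) [Ring S] [Algebra K S] (f : R →ₐ[K] S) (t : S),
      β.app S f t = f a * t * f ((a⁻¹ : Rˣ) : R) := by
  constructor <;> intro h S _ _ f t
  · rw [← h, mul_assoc, ← map_mul, Units.mul_inv, map_one, mul_one]
  · rw [h, mul_assoc, ← map_mul, Units.inv_mul, map_one, mul_one]

theorem IsIntertwiner.mul_eq_one_symm {a b : R} (ha : β.IsIntertwiner a) (hba : b * a = 1)
    (hsurj : Function.Surjective (β.app R (AlgHom.id K R))) : a * b = 1 := by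
  obtain ⟨t, ht⟩ := hsurj (1 - a * b)
  have a_mul_t : a * t = 0 :=
    calc a * t = β.app R (AlgHom.id K R) t * a := (ha R (AlgHom.id K R) t).symm
      _ = 0 := by rw [ht, sub_mul, one_mul, mul_assoc, hba, mul_one, sub_self]
  have t_eq : t = 0 := by rw [← one_mul t, ← hba, mul_assoc, a_mul_t, mul_zero]
  rw [t_eq, map_zero] at ht
  exact (sub_eq_zero.mp ht.symm).symm

theorem IsIntertwiner.commute {a : Rˣ} {a' : R} (ha : β.IsIntertwiner a)
    (ha' : β.IsIntertwiner a') (f : R →ₐ[K] S) (t : S) :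
    Commute t (f (((a⁻¹ : Rˣ) : R) * a')) := by
  have a_mul : f a * f (((a⁻¹ : Rˣ) : R) * a') = f a' := by
    rw [← map_mul, Units.mul_inv_cancel_left]
  refine (a.isUnit.map f).mul_left_cancel ?_
  calc f a * (t * f (((a⁻¹ : Rˣ) : R) * a'))
      = β.app S f t * f a' := by rw [← mul_assoc, ← ha, mul_assoc, a_mul]
    _ = f a * (f (((a⁻¹ : Rˣ) : R) * a') * t) := by rw [ha', ← mul_assoc, a_mul]

end CommRing

section Field

variable {K : Type v} [Field K] {R : Type u} [Ring R] [Algebra K R]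
  {β : ExtendedInnerEndomorphism K R}

theorem IsIntertwiner.exists_mul_eq_one {a : R} (ha : β.IsIntertwiner a) (ha₀ : a ≠ 0) :
    ∃ b, b * a = 1 := by
  by_contra! h
  obtain ⟨l, hl₁, hl⟩ := (LinearMap.range (LinearMap.mulRight K a)).exists_le_ker_of_notMem
    (v := 1) (fun ⟨b, hb⟩ => h b hb)
  have l_comp : l ∘ₗ LinearMap.mulRight K a = 0 := LinearMap.range_le_ker_iff.mp hl
  let y : Module.End K (R × R) := corner (l.smulRight 1)
  have app_y : β.app _ (prodLmul (AlgHom.id K R)) y (a, 0) = 0 := by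
    rw [β.app_corner_apply, l_comp]
    simp [contractSnd]
  have smul_a : l 1 • a = 0 := by
    have app_y_mul := LinearMap.congr_fun (ha _ (prodLmul (AlgHom.id K R)) y) (1, 0)
    simpa [Module.End.mul_apply, app_y, y, eq_comm] using congrArg Prod.snd app_y_mul
  exact smul_ne_zero hl₁ ha₀ smul_a

variable (β) in
theorem exists_unit_isIntertwiner (hsurj : Function.Surjective (β.app R (AlgHom.id K R))) :
    ∃ a : Rˣ, β.IsIntertwiner a := by
  cases subsingleton_or_nontrivial R
  · exact ⟨1, fun S _ _ f t =>
      have := f.toRingHom.codomain_trivial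
      Subsingleton.elim _ _⟩
  obtain ⟨l, hl⟩ := exists_contractSnd_ne_zero β.coeff_ne_zero
  have ha := β.isIntertwiner_contractSnd_coeff l
  obtain ⟨b, hba⟩ := ha.exists_mul_eq_one hl
  exact ⟨⟨_, b, ha.mul_eq_one_symm hba hsurj, hba⟩, ha⟩

theorem IsIntertwiner.exists_eq_algebraMap_mul {a : Rˣ} {a' : R} (ha : β.IsIntertwiner a)
    (ha' : β.IsIntertwiner a') : ∃ c : K, a' = algebraMap K R c * a := by
  obtain ⟨c, hc⟩ := exists_algebraMap_eq_of_commute_lmul (ha.commute ha' (Algebra.lmul K R))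
  refine ⟨c, ?_⟩
  rw [Algebra.commutes, hc, Units.mul_inv_cancel_left]

theorem IsIntertwiner.exists_eq_algebraMap_unit_mul {a a' : Rˣ} (ha : β.IsIntertwiner a)
    (ha' : β.IsIntertwiner a') : ∃ c : Kˣ, (a' : R) = algebraMap K R c * a := by
  obtain ⟨c, hc⟩ := ha.exists_eq_algebraMap_mul ha'
  cases subsingleton_or_nontrivial R
  · exact ⟨1, Subsingleton.elim _ _⟩
  refine ⟨Units.mk0 c ?_, hc⟩
  rintro rfl
  exact a'.ne_zero (by rw [hc, map_zero, zero_mul])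

end Field

end ExtendedInnerEndomorphism

theorem extended_inner_automorphism_of_algebra_general
    (K : Type v) [Field K] (R : Type u) [Ring R] [Algebra K R]
    (β : ∀ (S : Type u) [Ring S] [Algebra K S], (R →ₐ[K] S) → (S →ₐ[K] S))
    (hnat : ∀ (S₁ S₂ : Type u) [Ring S₁] [Algebra K S₁] [Ring S₂] [Algebra K S₂]
      (f₁ : R →ₐ[K] S₁) (f₂ : R →ₐ[K] S₂) (h : S₁ →ₐ[K] S₂),
      h.comp f₁ = f₂ → (β S₂ f₂).comp h = h.comp (β S₁ f₁))
    (hsurj : Function.Surjective (β R (AlgHom.id K R))) :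
    ∃ a : Rˣ,
      (∀ (S : Type u) [Ring S] [Algebra K S] (f : R →ₐ[K] S) (t : S),
        β S f t = f a * t * f ((a⁻¹ : Rˣ) : R)) ∧
      (∀ a' : Rˣ,
        (∀ (S : Type u) [Ring S] [Algebra K S] (f : R →ₐ[K] S) (t : S),
          β S f t = f a' * t * f ((a'⁻¹ : Rˣ) : R)) →
        ∃ c : Kˣ, (a' : R) = algebraMap K R c * a) := by
  let β' : ExtendedInnerEndomorphism K R := ⟨β, hnat⟩
  obtain ⟨a, ha⟩ := β'.exists_unit_isIntertwiner hsurj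
  exact ⟨a, ExtendedInnerEndomorphism.isIntertwiner_units_iff.mp ha, fun a' ha' =>
    ha.exists_eq_algebraMap_unit_mul
      (ExtendedInnerEndomorphism.isIntertwiner_units_iff (β := β').mpr ha')⟩

theorem extended_inner_automorphism_of_algebra
    (K : Type v) [Field K] (R : Type u) [Ring R] [Algebra K R] [Nontrivial R]
    (β : ∀ (S : Type u) [Ring S] [Algebra K S], (R →ₐ[K] S) → (S →ₐ[K] S))
    (hnat : ∀ (S₁ S₂ : Type u) [Ring S₁] [Algebra K S₁] [Ring S₂] [Algebra K S₂]
      (f₁ : R →ₐ[K] S₁) (f₂ : R →ₐ[K] S₂) (h : S₁ →ₐ[K] S₂),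
      h.comp f₁ = f₂ → (β S₂ f₂).comp h = h.comp (β S₁ f₁))
    (hbij : ∀ (S : Type u) [Ring S] [Algebra K S] (f : R →ₐ[K] S),
      Function.Bijective (β S f)) :
    ∃ a : Rˣ,
      (∀ (S : Type u) [Ring S] [Algebra K S] (f : R →ₐ[K] S) (t : S),
        β S f t = f a * t * f ((a⁻¹ : Rˣ) : R)) ∧
      (∀ a' : Rˣ,
        (∀ (S : Type u) [Ring S] [Algebra K S] (f : R →ₐ[K] S) (t : S),
          β S f t = f a' * t * f ((a'⁻¹ : Rˣ) : R)) →
        ∃ c : Kˣ, (a' : R) = algebraMap K R c * a) :=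
  extended_inner_automorphism_of_algebra_general K R β hnat (hbij R (AlgHom.id K R)).surjective
end

section
/- Let K be a commutative ring, R an associative unital K-algebra, n ∈ ℕ, and a, b : Fin n → R vectors satisfying ∑ i, a i * b i = 1 and, for all j k : Fin n, b j * a k = (if j = k then 1 else 0). Then for every associative unital K-algebra S and every K-algebra homomorphism f : R →ₐ[K] S, the map t ↦ ∑ i, f (a i) * t * f (b i) is a K-algebra homomorphism from S to S; moreover the resulting family, indexed by all such f, is an extended inner endomorphism of R: for all K-algebra homomorphisms f₁ : R →ₐ[K] S₁, f₂ : R →ₐ[K] S₂ and h : S₁ →ₐ[K] S₂ with h.comp f₁ = f₂, the map associated to f₂ composed with h equals h composed with the map associated to f₁. -/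
universe u v

/-!
The relations `∑ i, a i * b i = 1` and `b j * a k = δ j k` say that the row `a` and the column `b`
are mutually inverse matrices, so `t ↦ ∑ i, a i * t * b i` is conjugation by `a` of the scalar
matrix with diagonal entry `t`. Algebra homomorphisms preserve these relations, and they commute
with the conjugations because these are given by a formula.
-/

namespace ExtendedInner

variable {ι R S S₁ S₂ : Type*} [Fintype ι]
variable (K : Type*) [CommSemiring K] [Semiring R] [Semiring S] [Algebra K S]
variable [Semiring S₁] [Algebra K S₁] [Semiring S₂] [Algebra K S₂]

/-- The linear map `t ↦ ∑ i, a i * t * b i`, the product of the row `a`, the scalar matrix `t`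
and the column `b`. -/
def sandwich (a b : ι → S) : S →ₗ[K] S :=
  ∑ i, LinearMap.mulLeftRight K (a i, b i)

@[simp]
theorem sandwich_apply (a b : ι → S) (t : S) : sandwich K a b t = ∑ i, a i * t * b i := by
  simp [sandwich]

variable {K} in
theorem map_sandwich (h : S₁ →ₐ[K] S₂) (a b : ι → S₁) (t : S₁) :
    h (sandwich K a b t) = sandwich K (h ∘ a) (h ∘ b) (h t) := by
  simp

variable [DecidableEq ι]

theorem sandwich_mul {a b : ι → S} (hba : ∀ j k, b j * a k = if j = k then 1 else 0) (x y : S) :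
    sandwich K a b (x * y) = sandwich K a b x * sandwich K a b y := by
  have mul_term (i j : ι) : a i * x * b i * (a j * y * b j) =
      if i = j then a i * (x * y) * b j else 0 := by
    calc a i * x * b i * (a j * y * b j)
        = a i * x * (b i * a j) * y * b j := by simp only [mul_assoc]
      _ = if i = j then a i * (x * y) * b j else 0 := by
        rw [hba]
        split_ifs <;> simp [mul_assoc]
  simp [Finset.sum_mul_sum, mul_term]

/-- The defining relations of the Leavitt algebra of type `(1, n)`, where `n` is the cardinality of
the index type `ι`. Such pairs generalize a unit and its inverse, the case `n = 1`. -/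
structure IsLeavittPair (a b : ι → R) : Prop where
  sum_mul_eq_one : ∑ i, a i * b i = 1
  mul_eq_ite (j k : ι) : b j * a k = if j = k then 1 else 0

namespace IsLeavittPair

theorem map {a b : ι → R} (hab : IsLeavittPair a b) (f : R →+* S) :
    IsLeavittPair (f ∘ a) (f ∘ b) where
  sum_mul_eq_one := by simpa using congrArg f hab.sum_mul_eq_one
  mul_eq_ite j k := by simp [← map_mul, hab.mul_eq_ite, apply_ite f]

/-- The algebra endomorphism `t ↦ ∑ i, a i * t * b i`. It generalizes conjugation by a
unit, the case of a one-element index type. -/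
def conj {a b : ι → S} (hab : IsLeavittPair a b) : S →ₐ[K] S :=
  AlgHom.ofLinearMap (sandwich K a b) (by simpa using hab.sum_mul_eq_one)
    (sandwich_mul K hab.mul_eq_ite)

@[simp]
theorem conj_apply {a b : ι → S} (hab : IsLeavittPair a b) (t : S) :
    hab.conj K t = sandwich K a b t :=
  rfl

end IsLeavittPair

end ExtendedInner

open ExtendedInner in
theorem vectors_give_extended_inner_endomorphism_general.{w}
    {K R ι : Type*} [CommSemiring K] [Semiring R] [Algebra K R] [Fintype ι] [DecidableEq ι]
    {a b : ι → R} (hab : IsLeavittPair a b) :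
    ∃ β : ∀ (S : Type w) [Semiring S] [Algebra K S], (R →ₐ[K] S) → (S →ₐ[K] S),
      (∀ (S : Type w) [Semiring S] [Algebra K S] (f : R →ₐ[K] S) (t : S),
        β S f t = ∑ i, f (a i) * t * f (b i)) ∧
      (∀ (S₁ S₂ : Type w) [Semiring S₁] [Algebra K S₁] [Semiring S₂] [Algebra K S₂]
        (f₁ : R →ₐ[K] S₁) (f₂ : R →ₐ[K] S₂) (h : S₁ →ₐ[K] S₂),
        h.comp f₁ = f₂ → (β S₂ f₂).comp h = h.comp (β S₁ f₁)) := by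
  refine ⟨fun S _ _ f ↦ (hab.map (f : R →+* S)).conj K, fun S _ _ f t ↦ sandwich_apply K _ _ t, ?_⟩
  rintro S₁ S₂ _ _ _ _ f₁ _ h rfl
  ext t
  exact (map_sandwich h (f₁ ∘ a) (f₁ ∘ b) t).symm

theorem vectors_give_extended_inner_endomorphism
    (K : Type v) [CommRing K] (R : Type u) [Ring R] [Algebra K R]
    (n : ℕ) (a b : Fin n → R)
    (hab₁ : ∑ i, a i * b i = 1)
    (hab₂ : ∀ j k : Fin n, b j * a k = if j = k then 1 else 0) :
    ∃ β : ∀ (S : Type u) [Ring S] [Algebra K S], (R →ₐ[K] S) → (S →ₐ[K] S),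
      (∀ (S : Type u) [Ring S] [Algebra K S] (f : R →ₐ[K] S) (t : S),
        β S f t = ∑ i, f (a i) * t * f (b i)) ∧
      (∀ (S₁ S₂ : Type u) [Ring S₁] [Algebra K S₁] [Ring S₂] [Algebra K S₂]
        (f₁ : R →ₐ[K] S₁) (f₂ : R →ₐ[K] S₂) (h : S₁ →ₐ[K] S₂),
        h.comp f₁ = f₂ → (β S₂ f₂).comp h = h.comp (β S₁ f₁)) := by
  obtain ⟨β, hβ, hcomp⟩ := vectors_give_extended_inner_endomorphism_general (K := K) ⟨hab₁, hab₂⟩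
  exact ⟨fun S _ _ ↦ β S, fun S _ _ ↦ hβ S, fun S₁ S₂ _ _ _ _ ↦ hcomp S₁ S₂⟩
end

section
/- Let K be a commutative ring, R an associative unital K-algebra, and (β f) an extended inner endomorphism of R. Then the K-algebra endomorphism β (AlgHom.id K R) : R →ₐ[K] R (the value of the family at the identity homomorphism of R, i.e., the corresponding inner endomorphism of R) is injective. -/
/-!
Let `β` be an extended inner endomorphism of `R`. Everything rests on the fact that `β f` fixes each
`s : S` commuting with the image of `f : R →ₐ[K] S`. If `s * s = 0`, then `f` extends to
`R[ε] →ₐ[K] S` by `ε ↦ s`, so naturality gives `β f s = f c * s`, where `c : R` is read off from the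
value of `β` at `ε`. For arbitrary `s`, embed `S` diagonally in the `2 × 2` matrices and write
`diag(s, s)` as a sum of products of square-zero matrices, getting `β f s = f c ^ 2 * s`; for
`s = 1` this says `f c ^ 2 = 1`.

Left multiplication on the first factor of `S ⊗ S` is a copy of `S` in `End (S ⊗ S)` that is carried
by the swap to left multiplication on the second factor, a copy commuting with the first and hence
fixed by `β`. Thus `β f s` determines `s`.
-/

universe u v

open Matrix
open scoped DualNumber TensorProduct

theorem scalar_mul_eq_single_mul_single_add {A : Type*} [Semiring A] (x y : A) :
    scalar (Fin 2) (x * y) = single 0 1 x * single 1 0 y + single 1 0 x * single 0 1 y := by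
  ext i j
  fin_cases i <;> fin_cases j <;> simp

theorem lTensorAlgHom_comp_lmul_injective {K S : Type*} [CommSemiring K] [Semiring S]
    [Algebra K S] :
    Function.Injective ((Module.End.lTensorAlgHom K S S).comp (Algebra.lmul K S)) := by
  intro s t hst
  have eval_one : (1 : S) ⊗ₜ[K] (s * 1) = 1 ⊗ₜ[K] (t * 1) := DFunLike.congr_fun hst (1 ⊗ₜ[K] 1)
  simpa using congrArg (LinearMap.mul' K S) eval_one

/-- An extended inner endomorphism of the `K`-algebra `R`: an endomorphism of the forgetful functor
to `K`-algebras from the category of `K`-algebras under `R`. The algebras under `R` range over the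
universe of `R` itself. -/
structure ExtendedInnerEnd (K : Type v) [CommSemiring K] (R : Type u) [Ring R] [Algebra K R] where
  app {S : Type u} [Ring S] [Algebra K S] : (R →ₐ[K] S) → (S →ₐ[K] S)
  naturality {S T : Type u} [Ring S] [Algebra K S] [Ring T] [Algebra K T]
    (f : R →ₐ[K] S) (h : S →ₐ[K] T) : (app (h.comp f)).comp h = h.comp (app f)

namespace ExtendedInnerEnd

variable {K : Type v} [CommSemiring K] {R : Type u} [Ring R] [Algebra K R]
variable (β : ExtendedInnerEnd K R)
variable {S : Type u} [Ring S] [Algebra K S]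

theorem app_comp_apply {T : Type u} [Ring T] [Algebra K T]
    (f : R →ₐ[K] S) (h : S →ₐ[K] T) (s : S) : β.app (h.comp f) (h s) = h (β.app f s) :=
  DFunLike.congr_fun (β.naturality f h) s

/-- The element `c : R` such that `β` sends the dual number `ε` to `c • ε`; by naturality it governs
the action of `β` on all square-zero elements that commute with the image of `R`. -/
def epsCoeff : R :=
  (β.app (TrivSqZeroExt.inlAlgHom K R R) ε).snd

theorem fst_app_inlAlgHom_eps : (β.app (TrivSqZeroExt.inlAlgHom K R R) ε).fst = 0 := by
  have h := β.app_comp_apply (TrivSqZeroExt.inlAlgHom K R R) (TrivSqZeroExt.fstHom K R R) ε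
  simpa using h.symm

theorem app_apply_of_mul_self_eq_zero (f : R →ₐ[K] S) {s : S} (hs : s * s = 0)
    (hf : ∀ r, Commute s (f r)) : β.app f s = f β.epsCoeff * s := by
  let φ : R[ε] →ₐ[K] S := DualNumber.lift ⟨(f, s), hs, hf⟩
  calc
    β.app f s = β.app (φ.comp (TrivSqZeroExt.inlAlgHom K R R)) (φ ε) := by
      rw [DualNumber.lift_comp_inlHom, DualNumber.lift_apply_eps]
    _ = φ (β.app (TrivSqZeroExt.inlAlgHom K R R) ε) := β.app_comp_apply _ _ _
    _ = f β.epsCoeff * s := by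
      rw [DualNumber.lift_apply_apply, fst_app_inlAlgHom_eps, map_zero, zero_add, epsCoeff]

theorem app_scalarAlgHom_comp_single {n : Type} [Fintype n] [DecidableEq n] (f : R →ₐ[K] S)
    {i j : n} (hij : i ≠ j) {s : S} (hf : ∀ r, Commute s (f r)) :
    β.app ((scalarAlgHom n K).comp f) (single i j s) = single i j (f β.epsCoeff * s) := by
  rw [app_apply_of_mul_self_eq_zero]
  · ext k l
    simp [single_apply]
  · exact single_mul_single_of_ne _ _ _ _ hij.symm _
  · intro r
    ext k l
    simp [single_apply, (hf r).eq]

theorem app_apply_eq_epsCoeff_sq_mul (f : R →ₐ[K] S) {s : S} (hf : ∀ r, Commute s (f r)) :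
    β.app f s = f β.epsCoeff ^ 2 * s := by
  let δ : S →ₐ[K] Matrix (Fin 2) (Fin 2) S := scalarAlgHom (Fin 2) K
  have hδ : ∀ x y, δ (x * y) = single 0 1 x * single 1 0 y + single 1 0 x * single 0 1 y :=
    scalar_mul_eq_single_mul_single_add
  have app_single : ∀ {i j : Fin 2}, i ≠ j → ∀ {x : S}, (∀ r, Commute x (f r)) →
      β.app (δ.comp f) (single i j x) = single i j (f β.epsCoeff * x) :=
    β.app_scalarAlgHom_comp_single f
  have h1 : ∀ r, Commute 1 (f r) := fun r => Commute.one_left (f r)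
  suffices δ (β.app f s) = δ (f β.epsCoeff ^ 2 * s) from scalar_inj.mp this
  calc
    δ (β.app f s) = β.app (δ.comp f) (δ (1 * s)) := by rw [one_mul, app_comp_apply]
    _ = single 0 1 (f β.epsCoeff) * single 1 0 (f β.epsCoeff * s)
        + single 1 0 (f β.epsCoeff) * single 0 1 (f β.epsCoeff * s) := by
      rw [hδ, map_add, map_mul, map_mul, app_single zero_ne_one h1, app_single one_ne_zero hf,
        app_single one_ne_zero h1, app_single zero_ne_one hf, mul_one]
    _ = δ (f β.epsCoeff ^ 2 * s) := by rw [← hδ, sq, mul_assoc]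

theorem app_apply_of_commute (f : R →ₐ[K] S) {s : S} (hf : ∀ r, Commute s (f r)) :
    β.app f s = s := by
  have one_eq : 1 = f β.epsCoeff ^ 2 := by
    simpa using β.app_apply_eq_epsCoeff_sq_mul f fun r => Commute.one_left (f r)
  rw [β.app_apply_eq_epsCoeff_sq_mul f hf, ← one_eq, one_mul]

theorem app_injective_of_conj (f : R →ₐ[K] S) {E : Type u} [Ring E] [Algebra K E]
    (g : S →ₐ[K] E) (g' : S → E) (a b : E) (hconj : ∀ s, g' s = a * g s * b)
    (hcomm : ∀ s t, Commute (g' s) (g t)) (hg' : Function.Injective g') :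
    Function.Injective (β.app f) := by
  have g'_eq : ∀ s, g' s = β.app (g.comp f) a * g (β.app f s) * β.app (g.comp f) b := fun s =>
    calc
      g' s = β.app (g.comp f) (g' s) :=
        (β.app_apply_of_commute (g.comp f) fun r => hcomm s (f r)).symm
      _ = β.app (g.comp f) a * g (β.app f s) * β.app (g.comp f) b := by
        rw [hconj, map_mul, map_mul, app_comp_apply]
  intro s t hst
  apply hg'
  rw [g'_eq s, g'_eq t, hst]

end ExtendedInnerEnd

theorem inner_endomorphism_of_algebra_injective_general
    {K : Type v} [CommSemiring K] {R : Type u} [Ring R] [Algebra K R] (β : ExtendedInnerEnd K R)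
    {S : Type u} [Ring S] [Algebra K S] (f : R →ₐ[K] S) :
    Function.Injective (β.app f) := by
  let swap : Module.End K (S ⊗[K] S) := (TensorProduct.comm K S S).toLinearMap
  refine β.app_injective_of_conj f ((Module.End.rTensorAlgHom K S S).comp (Algebra.lmul K S))
    ((Module.End.lTensorAlgHom K S S).comp (Algebra.lmul K S)) swap swap ?_ ?_
    lTensorAlgHom_comp_lmul_injective
  · exact fun s => (LinearMap.comm_comp_rTensor_comp_comm_eq (Algebra.lmul K S s)).symm
  · exact fun s t => (LinearMap.lTensor_comp_rTensor S _ _).trans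
      (LinearMap.rTensor_comp_lTensor S _ _).symm

theorem inner_endomorphism_of_algebra_injective
    (K : Type v) [CommRing K] (R : Type u) [Ring R] [Algebra K R]
    (β : ∀ (S : Type u) [Ring S] [Algebra K S], (R →ₐ[K] S) → (S →ₐ[K] S))
    (hnat : ∀ (S₁ S₂ : Type u) [Ring S₁] [Algebra K S₁] [Ring S₂] [Algebra K S₂]
      (f₁ : R →ₐ[K] S₁) (f₂ : R →ₐ[K] S₂) (h : S₁ →ₐ[K] S₂),
      h.comp f₁ = f₂ → (β S₂ f₂).comp h = h.comp (β S₁ f₁)) :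
    Function.Injective (β R (AlgHom.id K R)) :=
  inner_endomorphism_of_algebra_injective_general
    ⟨fun {S} _ _ => β S, fun f h => hnat _ _ f _ h rfl⟩ (AlgHom.id K R)
end

section
/- Let K be a commutative ring. Every associative unital K-algebra R admits an injective K-algebra homomorphism f : R →ₐ[K] S into some associative unital K-algebra S with the property that for every nonzero r ∈ R, the two-sided ideal of S generated by f r contains a nonzero element of the center of S. -/
universe u v

/-!
The copies `a ⊗ 1` and `1 ⊗ r` of `R` commute inside `R ⊗[K] R`. Send `r` to the diagonal matrix
with entries `r ⊗ 1`, `1 ⊗ r`, `r ⊗ 1`. Multiplying it by `e₁₂` on the left and by `e₂₃` on the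
right moves `1 ⊗ r` to the top right corner. Among upper triangular matrices whose first and last
diagonal entries are one and the same `a ⊗ 1`, such a corner matrix is multiplied by `a ⊗ 1` from
either side, hence is central. It determines `r` because multiplication `R ⊗[K] R → R` takes
`1 ⊗ r` to `r`.
-/

open Matrix

section UpperTriangular

variable {ι A : Type*} [Fintype ι] [NonUnitalNonAssocSemiring A]

theorem upperTriangular_mul_apply_self [LinearOrder ι] {M N : Matrix ι ι A}
    (hM : M.BlockTriangular id) (hN : N.BlockTriangular id) (i : ι) :
    (M * N) i i = M i i * N i i := by
  rw [mul_apply, Fintype.sum_eq_single i]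
  intro j hj
  rcases hj.lt_or_gt with hlt | hgt
  · rw [hM hlt, zero_mul]
  · rw [hN hgt, mul_zero]

theorem upperTriangular_mul_single_bot [DecidableEq ι] [PartialOrder ι] [OrderBot ι]
    {M : Matrix ι ι A} (hM : M.BlockTriangular id) (j : ι) (z : A) :
    M * single ⊥ j z = single ⊥ j (M ⊥ ⊥ * z) := by
  ext k l
  rcases eq_or_ne l j with rfl | hl
  · rcases eq_or_ne k ⊥ with rfl | hk
    · simp
    · simp [hM (bot_lt_iff_ne_bot.mpr hk), single_apply_of_row_ne hk.symm]
  · simp [hl, single_apply_of_col_ne _ _ hl.symm]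

theorem single_top_mul_upperTriangular [DecidableEq ι] [PartialOrder ι] [OrderTop ι]
    {M : Matrix ι ι A} (hM : M.BlockTriangular id) (i : ι) (z : A) :
    single i ⊤ z * M = single i ⊤ (z * M ⊤ ⊤) := by
  ext k l
  rcases eq_or_ne k i with rfl | hk
  · rcases eq_or_ne l ⊤ with rfl | hl
    · simp
    · simp [hM (lt_top_iff_ne_top.mpr hl), single_apply_of_col_ne _ _ hl.symm]
  · simp [hk, single_apply_of_row_ne hk.symm]

end UpperTriangular

section CommonCorner

variable {K ι R A : Type*} [CommSemiring K] [Semiring R] [Algebra K R] [Semiring A] [Algebra K A]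
  [Fintype ι] [LinearOrder ι] [BoundedOrder ι]

variable (ι) in
/-- The algebra of upper triangular matrices whose first and last diagonal entries are equal and
lie in the subalgebra `B`. The first and last indices are `⊥` and `⊤`. -/
def commonCornerSubalgebra (B : Subalgebra K A) : Subalgebra K (Matrix ι ι A) where
  carrier := {M | M.BlockTriangular id ∧ M ⊤ ⊤ = M ⊥ ⊥ ∧ M ⊥ ⊥ ∈ B}
  mul_mem' := by
    rintro M N ⟨hM, hM_eq, hM_mem⟩ ⟨hN, hN_eq, hN_mem⟩
    refine ⟨hM.mul hN, ?_, ?_⟩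
    · simp only [upperTriangular_mul_apply_self hM hN, hM_eq, hN_eq]
    · rw [upperTriangular_mul_apply_self hM hN]
      exact B.mul_mem hM_mem hN_mem
  add_mem' := by
    rintro M N ⟨hM, hM_eq, hM_mem⟩ ⟨hN, hN_eq, hN_mem⟩
    exact ⟨hM.add hN, by simp only [Matrix.add_apply, hM_eq, hN_eq], B.add_mem hM_mem hN_mem⟩
  algebraMap_mem' k :=
    ⟨blockTriangular_algebraMap k, by simp [algebraMap_matrix_apply],
      by simp [algebraMap_matrix_apply]⟩

namespace commonCornerSubalgebra

theorem single_mem (B : Subalgebra K A) {i j : ι} (hij : i < j) (a : A) :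
    single i j a ∈ commonCornerSubalgebra ι B := by
  have diag_eq_zero (k : ι) : single i j a k k = 0 :=
    single_apply_of_ne _ _ _ _ _ fun h => hij.ne (h.1.trans h.2.symm)
  exact ⟨blockTriangular_single hij.le a, by simp only [diag_eq_zero],
    by simp only [diag_eq_zero, B.zero_mem]⟩

theorem mul_single_bot_top_comm {B : Subalgebra K A} {M : Matrix ι ι A}
    (hM : M ∈ commonCornerSubalgebra ι B) {z : A} (hz : z ∈ Subalgebra.centralizer K (B : Set A)) :
    M * single ⊥ ⊤ z = single ⊥ ⊤ z * M := by
  obtain ⟨hM_tri, hM_eq, hM_mem⟩ := hM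
  rw [upperTriangular_mul_single_bot hM_tri, single_top_mul_upperTriangular hM_tri, hM_eq,
    (Subalgebra.mem_centralizer_iff K).mp hz _ hM_mem]

/-- The homomorphism sending `r` to the diagonal matrix with entries `d i r`, provided that its
first and last entries are given by the same homomorphism. -/
def diagonalHom (d : ι → R →ₐ[K] A) (hd : d ⊤ = d ⊥) :
    R →ₐ[K] commonCornerSubalgebra ι (d ⊥).range :=
  ((diagonalAlgHom K).comp (AlgHom.pi d)).codRestrict _ fun r =>
    ⟨blockTriangular_diagonal _, by simp [hd], by simp⟩

theorem coe_diagonalHom (d : ι → R →ₐ[K] A) (hd : d ⊤ = d ⊥) (r : R) :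
    (diagonalHom d hd r : Matrix ι ι A) = diagonal fun i => d i r :=
  rfl

/-- The matrix unit in row `i` and column `j`, as an element of `commonCornerSubalgebra ι B`. -/
def matrixUnit (B : Subalgebra K A) {i j : ι} (hij : i < j) : commonCornerSubalgebra ι B :=
  ⟨single i j 1, single_mem B hij 1⟩

theorem coe_matrixUnit_mul_diagonalHom_mul_matrixUnit (d : ι → R →ₐ[K] A) (hd : d ⊤ = d ⊥)
    {i j k : ι} (hij : i < j) (hjk : j < k) (r : R) :
    ((matrixUnit _ hij * diagonalHom d hd r * matrixUnit _ hjk :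
      commonCornerSubalgebra ι (d ⊥).range) : Matrix ι ι A) = single i k (d j r) := by
  simp [matrixUnit, coe_diagonalHom]

theorem matrixUnit_mul_diagonalHom_mul_matrixUnit_mem_center (d : ι → R →ₐ[K] A)
    (hd : d ⊤ = d ⊥) {i : ι} (hbot : ⊥ < i) (htop : i < ⊤) (hcomm : ∀ a r, Commute (d ⊥ a) (d i r))
    (r : R) :
    matrixUnit _ hbot * diagonalHom d hd r * matrixUnit _ htop ∈
      Set.center (commonCornerSubalgebra ι (d ⊥).range) := by
  have hr : d i r ∈ Subalgebra.centralizer K ((d ⊥).range : Set A) := by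
    rw [Subalgebra.mem_centralizer_iff]
    rintro _ ⟨a, rfl⟩
    exact hcomm a r
  refine Semigroup.mem_center_iff.mpr fun M => Subtype.ext ?_
  rw [Subalgebra.coe_mul _ M, Subalgebra.coe_mul _ _ M,
    coe_matrixUnit_mul_diagonalHom_mul_matrixUnit]
  exact mul_single_bot_top_comm M.2 hr

theorem matrixUnit_mul_diagonalHom_mul_matrixUnit_injective (d : ι → R →ₐ[K] A)
    (hd : d ⊤ = d ⊥) {i j k : ι} (hij : i < j) (hjk : j < k) (hinj : Function.Injective (d j)) :
    Function.Injective fun r => matrixUnit _ hij * diagonalHom d hd r * matrixUnit _ hjk := by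
  intro r s hrs
  have single_eq : single i k (d j r) = single i k (d j s) := by
    simpa only [coe_matrixUnit_mul_diagonalHom_mul_matrixUnit] using congrArg Subtype.val hrs
  exact hinj (by simpa using congrFun₂ single_eq i k)

end commonCornerSubalgebra

end CommonCorner

open Algebra.TensorProduct commonCornerSubalgebra in
theorem exists_algHom_mul_mul_injective_mem_center
    (K : Type v) [CommSemiring K] (R : Type u) [Semiring R] [Algebra K R] :
    ∃ (S : Type u) (_ : Semiring S) (_ : Algebra K S) (f : R →ₐ[K] S) (x y : S),
      Function.Injective (fun r => x * f r * y) ∧ ∀ r, x * f r * y ∈ Set.center S := by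
  let d : Fin 3 → R →ₐ[K] TensorProduct K R R := ![includeLeft, includeRight, includeLeft]
  have hd : d ⊤ = d ⊥ := rfl
  have hbot : (⊥ : Fin 3) < 1 := by decide
  have htop : (1 : Fin 3) < ⊤ := by decide
  have hcomm (a r : R) : Commute (d ⊥ a) (d 1 r) :=
    (Commute.one_right a).tmul (Commute.one_left r)
  have hinj : Function.Injective (d 1) :=
    Function.LeftInverse.injective (g := LinearMap.mul' K R) fun r => by simp [d]
  exact ⟨_, inferInstance, inferInstance, diagonalHom d hd, matrixUnit _ hbot, matrixUnit _ htop,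
    matrixUnit_mul_diagonalHom_mul_matrixUnit_injective d hd hbot htop hinj,
    matrixUnit_mul_diagonalHom_mul_matrixUnit_mem_center d hd hbot htop hcomm⟩

/-- The ring structure on a semiring `S` that receives a homomorphism from a ring, with negation
given by multiplication by the image of `-1`. -/
abbrev ringOfRingHom {R S : Type*} [Ring R] [Semiring S] (f : R →+* S) : Ring S :=
  letI : Module R S := Module.compHom S f
  { ‹Semiring S›, Module.addCommMonoidToAddCommGroup R with }

theorem mul_mul_mem_twoSidedIdeal_span {S : Type*} [Ring S] (x a y : S) :
    x * a * y ∈ TwoSidedIdeal.span {a} :=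
  TwoSidedIdeal.mul_mem_right _ _ _
    (TwoSidedIdeal.mul_mem_left _ _ _ (TwoSidedIdeal.subset_span rfl))

theorem exists_embedding_ideal_meets_center_general
    (K : Type v) [CommSemiring K] (R : Type u) [Ring R] [Algebra K R] :
    ∃ (S : Type u) (_ : Ring S) (_ : Algebra K S) (f : R →ₐ[K] S),
      Function.Injective f ∧
      ∀ r : R, r ≠ 0 → ∃ c : S, c ≠ 0 ∧ c ∈ Set.center S ∧
        c ∈ TwoSidedIdeal.span {f r} := by
  obtain ⟨S, _, _, f, x, y, hinj, hcenter⟩ := exists_algHom_mul_mul_injective_mem_center K R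
  let : Ring S := ringOfRingHom (f : R →+* S)
  have hf : Function.Injective f := fun r s hrs => hinj (congrArg (x * · * y) hrs)
  have ne_zero (r : R) (hr : r ≠ 0) : x * f r * y ≠ 0 := by simpa using hinj.ne hr
  exact ⟨S, inferInstance, ‹Algebra K S›, f, hf, fun r hr =>
    ⟨x * f r * y, ne_zero r hr, hcenter r, mul_mul_mem_twoSidedIdeal_span x (f r) y⟩⟩

theorem exists_embedding_ideal_meets_center
    (K : Type v) [CommRing K] (R : Type u) [Ring R] [Algebra K R] :
    ∃ (S : Type u) (_ : Ring S) (_ : Algebra K S) (f : R →ₐ[K] S),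
      Function.Injective f ∧
      ∀ r : R, r ≠ 0 → ∃ c : S, c ≠ 0 ∧ c ∈ Set.center S ∧
        c ∈ TwoSidedIdeal.span {f r} :=
  exists_embedding_ideal_meets_center_general K R
end

section
/- Let K be a commutative ring, R an associative unital K-algebra, and (β f) an extended inner endomorphism of R. Then for every associative unital K-algebra S, every K-algebra homomorphism f : R →ₐ[K] S, and every element c ∈ S that commutes with f r for all r ∈ R (i.e., c lies in the centralizer of the image of f), one has (β f) c = c. In particular, β f fixes every element of the center of S. -/
universe u v

/-!
Let `p + aε` be the value of `β` at `ε` for the inclusion of `R` into its dual numbers `R[ε]`.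
Sending `ε` to `0` gives `p = 0`; sending `ε` to an element `c` of square zero that commutes with
the image of `f` gives `β f c = f a * c`. For an arbitrary `c` commuting with the image of `f`, the
matrix unit `c E₀₀ = (c E₀₁) (E₁₀)` is a product of two elements of square zero commuting with the
scalar matrices over the image, so `β` multiplies it by `f a * f a`. On the other hand `β` acts on
diagonal matrices entrywise, whence `β f c = f a * f a * c`. The case `c = 1` gives `a * a = 1`.
-/

open Matrix TrivSqZeroExt
open scoped DualNumber

theorem commute_single_scalar {n α : Type*} [Fintype n] [DecidableEq n] [Semiring α] {c r : α}
    (h : Commute c r) (i j : n) : Commute (single i j c) (scalar n r) := by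
  refine (scalar_commute_iff.mpr ?_).symm
  rw [smul_single, smul_single, smul_eq_mul, op_smul_eq_mul, h.eq]

/-- A variant of the extended inner endomorphisms of a `K`-algebra `R` in which the components are
only multiplicative maps preserving `0`, not algebra homomorphisms: an endomorphism of the functor
sending an algebra `S` under `R` to its multiplicative monoid with zero. The field `app_comp` is
naturality, with the target of a morphism of algebras under `R` written as a composite. -/
structure MulExtendedInnerEnd (K : Type v) [CommSemiring K] (R : Type u) [Ring R]
    [Algebra K R] where
  app (S : Type u) [Ring S] [Algebra K S] : (R →ₐ[K] S) → (S →*₀ S)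
  app_comp {S T : Type u} [Ring S] [Algebra K S] [Ring T] [Algebra K T]
    (h : S →ₐ[K] T) (f : R →ₐ[K] S) (s : S) : app T (h.comp f) (h s) = h (app S f s)

namespace MulExtendedInnerEnd

variable {K : Type v} [CommSemiring K] {R : Type u} [Ring R] [Algebra K R]
  (β : MulExtendedInnerEnd K R) {S : Type u} [Ring S] [Algebra K S]

/-- The element `a` of `R` such that `β` multiplies by `a` every element of square zero that
commutes with `R`, defined as the coefficient of `ε` in the value of `β` at the universal such
element, `ε : R[ε]`. -/
def squareZeroCoeff : R :=
  (β.app R[ε] (inlAlgHom K R R) ε).snd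

theorem app_eps : β.app R[ε] (inlAlgHom K R R) ε = inr β.squareZeroCoeff := by
  have fst_eq_zero : (β.app R[ε] (inlAlgHom K R R) ε).fst = 0 := by
    simpa using (β.app_comp (fstHom K R R) (inlAlgHom K R R) ε).symm
  exact TrivSqZeroExt.ext fst_eq_zero rfl

theorem app_of_mul_self_eq_zero (f : R →ₐ[K] S) {c : S} (hc : ∀ r, Commute c (f r))
    (hcc : c * c = 0) : β.app S f c = f β.squareZeroCoeff * c := by
  let h : R[ε] →ₐ[K] S := DualNumber.lift ⟨(f, c), hcc, hc⟩
  calc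
    β.app S f c = β.app S (h.comp (inlAlgHom K R R)) (h ε) := by
      rw [DualNumber.lift_comp_inlHom, DualNumber.lift_apply_eps]
    _ = h (inr β.squareZeroCoeff) := by rw [β.app_comp, app_eps]
    _ = f β.squareZeroCoeff * c := by simp [h, DualNumber.lift_apply_apply]

section Diagonal

variable {ι : Type}

theorem app_pi {S : ι → Type u} [∀ i, Ring (S i)] [∀ i, Algebra K (S i)]
    (f : ∀ i, R →ₐ[K] S i) (s : ∀ i, S i) :
    β.app (∀ i, S i) (AlgHom.pi f) s = fun i => β.app (S i) (f i) (s i) :=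
  funext fun i => (β.app_comp (Pi.evalAlgHom K S i) (AlgHom.pi f) s).symm

variable [Fintype ι] [DecidableEq ι]

theorem app_diagonal (f : R →ₐ[K] S) (d : ι → S) :
    β.app (Matrix ι ι S) ((scalarAlgHom ι K).comp f) (diagonal d) =
      diagonal fun i => β.app S f (d i) := by
  have h := β.app_comp (diagonalAlgHom (n := ι) (α := S) K) (AlgHom.pi fun _ => f) d
  rwa [app_pi] at h

theorem app_single_of_ne (f : R →ₐ[K] S) {c : S} (hc : ∀ r, Commute c (f r)) {i j : ι}
    (hij : i ≠ j) :
    β.app (Matrix ι ι S) ((scalarAlgHom ι K).comp f) (single i j c) =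
      single i j (f β.squareZeroCoeff * c) := by
  rw [β.app_of_mul_self_eq_zero _ (fun r => commute_single_scalar (hc r) i j)
      (single_mul_single_of_ne _ _ _ _ hij.symm _),
    AlgHom.comp_apply, scalarAlgHom_apply, scalar_apply, ← smul_eq_diagonal_mul, smul_single,
    smul_eq_mul]

end Diagonal

theorem app_eq_mul_mul (f : R →ₐ[K] S) {c : S} (hc : ∀ r, Commute c (f r)) :
    β.app S f c = f β.squareZeroCoeff * f β.squareZeroCoeff * c := by
  set a := f β.squareZeroCoeff
  let F : R →ₐ[K] Matrix (Fin 2) (Fin 2) S := (scalarAlgHom (Fin 2) K).comp f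
  have h : single 0 0 (β.app S f c) = single (0 : Fin 2) (0 : Fin 2) (a * a * c) := calc
    single 0 0 (β.app S f c) = β.app _ F (single 0 0 c) := by
      rw [← diagonal_single, ← diagonal_single, app_diagonal]
      congr 1
      exact (funext fun i => Pi.apply_single (fun _ => β.app S f) (fun _ => map_zero _) 0 c i).symm
    _ = β.app _ F (single 0 1 c * single 1 0 1) := by rw [single_mul_single_same, mul_one]
    _ = single 0 1 (a * c) * single 1 0 (a * 1) := by
      rw [map_mul, β.app_single_of_ne f hc zero_ne_one,
        β.app_single_of_ne f (fun r => Commute.one_left (f r)) one_ne_zero]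
    _ = single 0 0 (a * a * c) := by
      rw [single_mul_single_same, mul_one, mul_assoc, (hc _).eq, mul_assoc]
  simpa only [single_apply_same] using congr_fun₂ h 0 0

theorem squareZeroCoeff_mul_self : β.squareZeroCoeff * β.squareZeroCoeff = 1 := by
  simpa using (β.app_eq_mul_mul (AlgHom.id K R) fun r => Commute.one_left r).symm

end MulExtendedInnerEnd

theorem extended_inner_endomorphism_fixes_centralizer_general
    {K : Type v} [CommSemiring K] {R : Type u} [Ring R] [Algebra K R]
    (β : MulExtendedInnerEnd K R) {S : Type u} [Ring S] [Algebra K S] (f : R →ₐ[K] S) {c : S}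
    (hc : ∀ r, Commute c (f r)) : β.app S f c = c := by
  rw [β.app_eq_mul_mul f hc, ← map_mul, β.squareZeroCoeff_mul_self, map_one, one_mul]

theorem extended_inner_endomorphism_fixes_centralizer
    (K : Type v) [CommRing K] (R : Type u) [Ring R] [Algebra K R]
    (β : ∀ (S : Type u) [Ring S] [Algebra K S], (R →ₐ[K] S) → (S →ₐ[K] S))
    (hnat : ∀ (S₁ S₂ : Type u) [Ring S₁] [Algebra K S₁] [Ring S₂] [Algebra K S₂]
      (f₁ : R →ₐ[K] S₁) (f₂ : R →ₐ[K] S₂) (h : S₁ →ₐ[K] S₂),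
      h.comp f₁ = f₂ → (β S₂ f₂).comp h = h.comp (β S₁ f₁)) :
    (∀ (S : Type u) [Ring S] [Algebra K S] (f : R →ₐ[K] S) (c : S),
      (∀ r : R, c * f r = f r * c) → β S f c = c) ∧
    (∀ (S : Type u) [Ring S] [Algebra K S] (f : R →ₐ[K] S),
      ∀ c ∈ Set.center S, β S f c = c) := by
  let γ : MulExtendedInnerEnd K R :=
    { app := fun S _ _ f => (β S f).toRingHom.toMonoidWithZeroHom
      app_comp := fun h f s => DFunLike.congr_fun (hnat _ _ f _ h rfl) s }
  exact ⟨fun S _ _ f c hc => extended_inner_endomorphism_fixes_centralizer_general γ f hc,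
    fun S _ _ f c hc => extended_inner_endomorphism_fixes_centralizer_general γ f
      fun r => (Set.mem_center_iff.mp hc).comm (f r)⟩
end

section
/- Let K be a commutative ring and R an associative unital K-algebra such that the structure map algebraMap K R has a K-module-theoretic left inverse, i.e., there exists a K-linear map φ : R →ₗ[K] K with φ (algebraMap K R c) = c for all c ∈ K. Suppose given, for every associative unital K-algebra S and every K-algebra homomorphism f : R →ₐ[K] S, a K-linear derivation d f : Derivation K S S, such that for all K-algebra homomorphisms f₁ : R →ₐ[K] S₁, f₂ : R →ₐ[K] S₂ and h : S₁ →ₐ[K] S₂ with h.comp f₁ = f₂, one has h ((d f₁) s) = (d f₂) (h s) for all s ∈ S₁. Then there exists b ∈ R such that for every f : R →ₐ[K] S and every t ∈ S, (d f) t = f b * t - t * f b; moreover, b is unique up to an additive constant from K: if b' ∈ R also has this property, then b' - b lies in the range of algebraMap K R. -/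
/-! Each representation of `R` on a `K`-module `V` gives a map `d : End V → End V`. Let `α` be an
intertwiner of two representations. Naturality, applied to the algebra of pairs `(T, U)` with
`α ∘ T = U ∘ α`, shows that `α ∘ d T = d U ∘ α` for all such pairs.

Let `b = d (φ ⊗ 1) 1`, where `φ ⊗ v` is the rank-one operator `x ↦ φ x • v`. On `R × S`, put
`E s = (φ ∘ fst) ⊗ (1, s)`. The graph `r ↦ (r, f r * s)` intertwines `φ ⊗ 1` with `E s`, which
gives `d (E s) (1, s) = (b, f b * s)`. As `E s` vanishes on `0 × S`, so does `d (E s)`, and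
`(1, s)` may be replaced here by `(1, 1)`. Since `E s = (id × (s * ·)) ∘ E 1`, the Leibniz rule
evaluated at `(1, 1)` reads `f b * s = d s + s * f b` in the second coordinate.
-/

universe u v

section IntertwiningSubalgebra

variable {K V W : Type*} [CommSemiring K] [AddCommMonoid V] [Module K V]
  [AddCommMonoid W] [Module K W]

/-- The algebra of pairs of endomorphisms intertwined by a linear map `α`. It projects onto
algebras of endomorphisms of both `V` and `W`, which lets naturality compare the two. -/
def intertwiningSubalgebra (α : V →ₗ[K] W) :
    Subalgebra K (Module.End K V × Module.End K W) where
  carrier := {p | α ∘ₗ p.1 = p.2 ∘ₗ α}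
  mul_mem' {p q} hp hq := by
    change α ∘ₗ p.1 ∘ₗ q.1 = (p.2 ∘ₗ q.2) ∘ₗ α
    rw [← LinearMap.comp_assoc, hp, LinearMap.comp_assoc, hq, LinearMap.comp_assoc]
  add_mem' {p q} hp hq := by
    change α ∘ₗ (p.1 + q.1) = (p.2 + q.2) ∘ₗ α
    rw [LinearMap.comp_add, LinearMap.add_comp, hp, hq]
  algebraMap_mem' c := by
    ext x
    exact map_smul α c x

theorem mem_intertwiningSubalgebra {α : V →ₗ[K] W} {p : Module.End K V × Module.End K W} :
    p ∈ intertwiningSubalgebra α ↔ α ∘ₗ p.1 = p.2 ∘ₗ α :=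
  Iff.rfl

end IntertwiningSubalgebra

section ProdRep

variable {K R S : Type*} [CommSemiring K] [Semiring R] [Algebra K R] [Semiring S] [Algebra K S]

/-- The representation of `R` on `R × S` by left multiplication, where `R` acts on `S` through
`f`. -/
def prodRep (f : R →ₐ[K] S) : R →ₐ[K] Module.End K (R × S) :=
  (LinearMap.prodMapAlgHom K R S).comp ((Algebra.lmul K R).prod ((Algebra.lmul K S).comp f))

@[simp]
theorem prodRep_apply (f : R →ₐ[K] S) (r : R) (x : R × S) :
    prodRep f r x = (r * x.1, f r * x.2) :=
  rfl

end ProdRep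

/-- A family of arbitrary (set-theoretic) self-maps of the `K`-algebras under `R`, indexed by the
structure morphisms `R →ₐ[K] S`. -/
abbrev OperatorFamily (K : Type v) [CommRing K] (R : Type u) [Ring R] [Algebra K R] :=
  ∀ (S : Type u) [Ring S] [Algebra K S], (R →ₐ[K] S) → S → S

namespace OperatorFamily

variable {K : Type v} [CommRing K] {R : Type u} [Ring R] [Algebra K R]

/-- The Leibniz rule for every member of an operator family. -/
def IsLeibniz (d : OperatorFamily K R) : Prop :=
  ∀ (S : Type u) [Ring S] [Algebra K S] (f : R →ₐ[K] S) (x y : S),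
    d S f (x * y) = d S f x * y + x * d S f y

/-- Compatibility of an operator family with all morphisms of algebras under `R`. -/
def IsNatural (d : OperatorFamily K R) : Prop :=
  ∀ (S₁ S₂ : Type u) [Ring S₁] [Algebra K S₁] [Ring S₂] [Algebra K S₂]
    (f₁ : R →ₐ[K] S₁) (f₂ : R →ₐ[K] S₂) (h : S₁ →ₐ[K] S₂),
    h.comp f₁ = f₂ → ∀ s : S₁, h (d S₁ f₁ s) = d S₂ f₂ (h s)

variable {d : OperatorFamily K R} {S : Type u} [Ring S] [Algebra K S]
  {V W : Type u} [AddCommGroup V] [Module K V] [AddCommGroup W] [Module K W]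
  {ρ : R →ₐ[K] Module.End K V} {σ : R →ₐ[K] Module.End K W} {α : V →ₗ[K] W}

theorem IsLeibniz.map_zero (hd : d.IsLeibniz) (f : R →ₐ[K] S) : d S f 0 = 0 := by
  simpa using hd S f 0 0

theorem IsNatural.comp_eq_comp (hd : d.IsNatural) (hα : ∀ r, α ∘ₗ ρ r = σ r ∘ₗ α)
    {T : Module.End K V} {U : Module.End K W} (hTU : α ∘ₗ T = U ∘ₗ α) :
    α ∘ₗ d _ ρ T = d _ σ U ∘ₗ α := by
  let A := intertwiningSubalgebra α
  let τ : R →ₐ[K] A := (ρ.prod σ).codRestrict A hα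
  let p : A := ⟨(T, U), hTU⟩
  have h_fst : (d A τ p).1.1 = d _ ρ T :=
    hd A _ τ ρ ((AlgHom.fst K _ _).comp A.val) rfl p
  have h_snd : (d A τ p).1.2 = d _ σ U :=
    hd A _ τ σ ((AlgHom.snd K _ _).comp A.val) rfl p
  rw [← h_fst, ← h_snd]
  exact mem_intertwiningSubalgebra.mp (d A τ p).2

theorem IsNatural.smulRight_apply (hd : d.IsNatural) (hα : ∀ r, α ∘ₗ ρ r = σ r ∘ₗ α)
    (ψ : W →ₗ[K] K) (v x : V) :
    d _ σ (ψ.smulRight (α v)) (α x) = α (d _ ρ ((ψ ∘ₗ α).smulRight v) x) := by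
  have h_rank_one : α ∘ₗ (ψ ∘ₗ α).smulRight v = ψ.smulRight (α v) ∘ₗ α := by
    ext
    simp
  exact (LinearMap.congr_fun (hd.comp_eq_comp hα h_rank_one) x).symm

theorem IsNatural.comp_eq_zero (hd : d.IsNatural) (hL : d.IsLeibniz)
    (hα : ∀ r, α ∘ₗ ρ r = σ r ∘ₗ α) {U : Module.End K W} (hU : U ∘ₗ α = 0) :
    d _ σ U ∘ₗ α = 0 := by
  rw [← hd.comp_eq_comp hα (T := 0) (by rw [hU, LinearMap.comp_zero]), hL.map_zero,
    LinearMap.comp_zero]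

theorem IsNatural.lmul (hd : d.IsNatural) (f : R →ₐ[K] S) (s : S) :
    d _ ((Algebra.lmul K S).comp f) (Algebra.lmul K S s) = Algebra.lmul K S (d S f s) :=
  (hd _ _ f _ (Algebra.lmul K S) rfl s).symm

theorem IsNatural.snd_prodRep_prodMap_lmul (hd : d.IsNatural) (f : R →ₐ[K] S) (s : S)
    (x : R × S) :
    (d _ (prodRep f) (LinearMap.id.prodMap (Algebra.lmul K S s)) x).2 = d S f s * x.2 := by
  have h_snd := hd.comp_eq_comp (α := LinearMap.snd K R S) (ρ := prodRep f)
    (σ := (Algebra.lmul K S).comp f) (fun _ ↦ rfl)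
    (T := LinearMap.id.prodMap (Algebra.lmul K S s)) (U := Algebra.lmul K S s) rfl
  rw [hd.lmul] at h_snd
  exact LinearMap.congr_fun h_snd x

/-- The candidate `d (φ ⊗ 1) 1` for an element of `R` inducing `d`, where `φ ⊗ 1` is the operator
`r ↦ φ r • 1` on the left regular representation of `R`. -/
def innerElement (d : OperatorFamily K R) (φ : R →ₗ[K] K) : R :=
  d _ (Algebra.lmul K R) (φ.smulRight 1) 1

theorem IsNatural.prodRep_smulRight (hd : d.IsNatural) (hL : d.IsLeibniz) (φ : R →ₗ[K] K)
    (f : R →ₐ[K] S) (s u : S) :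
    d _ (prodRep f) ((φ ∘ₗ LinearMap.fst K R S).smulRight (1, s)) (1, u) =
      (d.innerElement φ, f (d.innerElement φ) * s) := by
  set E := (φ ∘ₗ LinearMap.fst K R S).smulRight ((1, s) : R × S) with hE
  let graph : R →ₗ[K] R × S := LinearMap.id.prod (LinearMap.mulRight K s ∘ₗ f.toLinearMap)
  have h_graph_one : graph 1 = (1, s) := by simp [graph]
  have h_graph : d _ (prodRep f) E (1, s) = graph (d.innerElement φ) := by
    have h := hd.smulRight_apply (α := graph) (ρ := Algebra.lmul K R) (σ := prodRep f)
      (fun r ↦ by ext x <;> simp [graph, mul_assoc]) (φ ∘ₗ LinearMap.fst K R S) 1 1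
    rwa [h_graph_one] at h
  have h_inr : d _ (prodRep f) E (0, u - s) = 0 :=
    LinearMap.congr_fun (hd.comp_eq_zero hL (α := LinearMap.inr K R S)
      (ρ := (Algebra.lmul K S).comp f) (fun r ↦ by ext x <;> simp)
      (by ext x <;> simp [hE])) (u - s)
  calc d _ (prodRep f) E (1, u)
      = d _ (prodRep f) E (1, s) + d _ (prodRep f) E (0, u - s) := by
        rw [← map_add, Prod.mk_add_mk, add_zero, add_sub_cancel]
    _ = (d.innerElement φ, f (d.innerElement φ) * s) := by
        rw [h_graph, h_inr, add_zero]
        rfl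

theorem IsNatural.eq_commutator_innerElement (hd : d.IsNatural) (hL : d.IsLeibniz)
    {φ : R →ₗ[K] K} (hφ : φ 1 = 1) (f : R →ₐ[K] S) (t : S) :
    d S f t = f (d.innerElement φ) * t - t * f (d.innerElement φ) := by
  let E (s : S) : Module.End K (R × S) := (φ ∘ₗ LinearMap.fst K R S).smulRight (1, s)
  let Y : Module.End K (R × S) := LinearMap.id.prodMap (Algebra.lmul K S t)
  have h_factor : Y * E 1 = E t := by
    ext x <;> simp [Y, E]
  have h_fix : E 1 (1, 1) = (1, 1) := by simp [E, hφ]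
  have h_leibniz : (d _ (prodRep f) (E t) (1, 1)).2 =
      (d _ (prodRep f) Y (E 1 (1, 1))).2 + t * (d _ (prodRep f) (E 1) (1, 1)).2 := by
    rw [← h_factor, hL]
    rfl
  rw [h_fix, hd.prodRep_smulRight hL, hd.prodRep_smulRight hL, hd.snd_prodRep_prodMap_lmul]
    at h_leibniz
  simp only [mul_one] at h_leibniz
  exact eq_sub_of_add_eq h_leibniz.symm

theorem sub_innerElement_eq_algebraMap {φ : R →ₗ[K] K} (hφ : φ 1 = 1) {b : R}
    (hb : ∀ T : Module.End K R, d _ (Algebra.lmul K R) T =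
      Algebra.lmul K R b * T - T * Algebra.lmul K R b) :
    b - d.innerElement φ = algebraMap K R (φ b) := by
  simp [innerElement, hb, hφ, Algebra.algebraMap_eq_smul_one]

end OperatorFamily

open OperatorFamily in
theorem extended_inner_derivation_of_algebra_general
    {K : Type v} [CommRing K] {R : Type u} [Ring R] [Algebra K R]
    (φ : R →ₗ[K] K) (hφ : φ 1 = 1)
    (d : OperatorFamily K R) (hLeibniz : d.IsLeibniz) (hnat : d.IsNatural) :
    ∃ b : R,
      (∀ (S : Type u) [Ring S] [Algebra K S] (f : R →ₐ[K] S) (t : S),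
        d S f t = f b * t - t * f b) ∧
      (∀ b' : R,
        (∀ (S : Type u) [Ring S] [Algebra K S] (f : R →ₐ[K] S) (t : S),
          d S f t = f b' * t - t * f b') →
        b' - b ∈ Set.range (algebraMap K R)) :=
  ⟨d.innerElement φ, fun _ _ _ ↦ hnat.eq_commutator_innerElement hLeibniz hφ,
    fun b' hb' ↦ ⟨φ b', (sub_innerElement_eq_algebraMap hφ (hb' _ _)).symm⟩⟩

theorem extended_inner_derivation_of_algebra
    (K : Type v) [CommRing K] (R : Type u) [Ring R] [Algebra K R]
    (φ : R →ₗ[K] K) (hφ : ∀ c : K, φ (algebraMap K R c) = c)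
    (d : ∀ (S : Type u) [Ring S] [Algebra K S], (R →ₐ[K] S) → (S →ₗ[K] S))
    (hLeibniz : ∀ (S : Type u) [Ring S] [Algebra K S] (f : R →ₐ[K] S) (x y : S),
      d S f (x * y) = d S f x * y + x * d S f y)
    (hnat : ∀ (S₁ S₂ : Type u) [Ring S₁] [Algebra K S₁] [Ring S₂] [Algebra K S₂]
      (f₁ : R →ₐ[K] S₁) (f₂ : R →ₐ[K] S₂) (h : S₁ →ₐ[K] S₂),
      h.comp f₁ = f₂ → ∀ s : S₁, h (d S₁ f₁ s) = d S₂ f₂ (h s)) :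
    ∃ b : R,
      (∀ (S : Type u) [Ring S] [Algebra K S] (f : R →ₐ[K] S) (t : S),
        d S f t = f b * t - t * f b) ∧
      (∀ b' : R,
        (∀ (S : Type u) [Ring S] [Algebra K S] (f : R →ₐ[K] S) (t : S),
          d S f t = f b' * t - t * f b') →
        b' - b ∈ Set.range (algebraMap K R)) :=
  extended_inner_derivation_of_algebra_general φ (by simpa using hφ 1)
    (fun S _ _ f ↦ d S f) hLeibniz hnat
end

section
/- Let K be a field and L a Lie algebra over K in universe u. Suppose given, for every Lie algebra M over K in universe u and every Lie algebra homomorphism f : L →ₗ⁅K⁆ M, a Lie algebra homomorphism β f : M →ₗ⁅K⁆ M, such that for all Lie algebra homomorphisms f₁ : L →ₗ⁅K⁆ M₁, f₂ : L →ₗ⁅K⁆ M₂ and h : M₁ →ₗ⁅K⁆ M₂ with h.comp f₁ = f₂, one has (β f₂).comp h = h.comp (β f₁). Then either β f is the zero map for every f, or β f is the identity map of M for every f. -/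
universe u v

/-!
An extended inner endomorphism `β` of `L` acts on each abelian ideal `V` of a split extension
`V ⋊ L`, by an operator natural in the `L`-module `V`, and it acts on the trivial module `K` by a
scalar `c`. The relation `[E₀₀, E₀₁] = E₀₁` in `2 × 2` matrices gives `c² = c`.

If `L` acts on an algebra `A` by derivations, then `β` is multiplicative on `A`, because the product
of `A` is a bracket in `3 × 3` matrices. By naturality `β` stays within the `L`-submodule of
operators generated by the identity, so it is a differential operator of finite order and maps high
powers of `a` to multiples of `a`. A multiplicative map with this property preserves the kernel of
every `K`-point of a commutative `A`; hence it is `c` at each `K`-point. For the polynomial algebra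
generated by `V` this gives `β = c` on every `L`-module `V`.

Applied to `M ⋊ M`, this shows that `c` times `β m - m` is central in `M`, so that `β` multiplies
brackets `[y, m]` by `c` as soon as `y` commutes with the image of `L`. Inside `M[t] ⋊ Der M[t]`
every element of `M` is such a bracket: `m = [d/dt, t m]`.
-/

universe w w₁ w₂

open LieAlgebra LieModule.Cohomology
open scoped TensorProduct

/-- The split extension `V ⋊ S` of a Lie algebra `S` by an `S`-module `V`, regarded as an abelian
ideal: the extension with vanishing cocycle. -/
abbrev SplitExtension (K S V : Type*) [CommRing K] [LieRing S] [LieAlgebra K S]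
    [AddCommGroup V] [Module K V] [LieRingModule S V] [LieModule K S V] : Type _ :=
  ofTwoCocycle (0 : twoCocycle K S V)

namespace SplitExtension

variable {K S V M : Type*} [CommRing K] [LieRing S] [LieAlgebra K S]
  [AddCommGroup V] [Module K V] [LieRingModule S V] [LieModule K S V]
  [LieRing M] [LieAlgebra K M]

instance [Small.{u} S] [Small.{u} V] : Small.{u} (SplitExtension K S V) :=
  small_map (ofProd _).symm

variable (K S V) in
/-- The inclusion of the abelian ideal `V` into `V ⋊ S`. -/
def inl : V →ₗ[K] SplitExtension K S V where
  toFun v := ofProd _ (0, v)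
  map_add' v w := by simp [← of_add]
  map_smul' k v := by simp [← of_smul]

variable (K S V) in
/-- The inclusion of the subalgebra `S` into `V ⋊ S`. -/
def inr : S →ₗ⁅K⁆ SplitExtension K S V where
  toFun x := ofProd _ (x, 0)
  map_add' x y := by simp [← of_add]
  map_smul' k x := by simp [← of_smul]
  map_lie' {x y} := by simp [bracket_ofTwoCocycle]

variable (K S V) in
/-- The projection of `V ⋊ S` onto `S`. -/
def proj : SplitExtension K S V →ₗ⁅K⁆ S where
  toFun p := ((ofProd _).symm p).1
  map_add' p q := by simp
  map_smul' k p := by simp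
  map_lie' {p q} := by simp [bracket_ofTwoCocycle]

variable (K S V) in
/-- The linear projection of `V ⋊ S` onto the ideal `V` along `S`. -/
def projIdeal : SplitExtension K S V →ₗ[K] V where
  toFun p := ((ofProd _).symm p).2
  map_add' p q := by simp
  map_smul' k p := by simp

theorem inl_injective : Function.Injective (inl K S V) := fun v w h ↦ by
  simpa [inl] using h

@[simp] theorem proj_inl (v : V) : proj K S V (inl K S V v) = 0 := rfl

theorem inl_projIdeal {p : SplitExtension K S V} (hp : proj K S V p = 0) :
    inl K S V (projIdeal K S V p) = p :=
  congrArg (ofProd _) (Prod.ext hp.symm rfl)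

@[simp] theorem lie_inr_inl (x : S) (v : V) :
    ⁅inr K S V x, inl K S V v⁆ = inl K S V ⁅x, v⁆ := by
  simp [inl, inr, bracket_ofTwoCocycle]

@[simp] theorem lie_inl_inl (v w : V) : ⁅inl K S V v, inl K S V w⁆ = 0 := by
  simp [inl, bracket_ofTwoCocycle, ← Prod.zero_eq_mk]

/-- The homomorphism out of `V ⋊ S` determined by its restrictions to `S` and `V`. -/
def lift (f : S →ₗ⁅K⁆ M) (g : V →ₗ[K] M) (hfg : ∀ x v, ⁅f x, g v⁆ = g ⁅x, v⁆)
    (hg : ∀ v w, ⁅g v, g w⁆ = 0) : SplitExtension K S V →ₗ⁅K⁆ M where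
  toFun p := f ((ofProd _).symm p).1 + g ((ofProd _).symm p).2
  map_add' p q := by simp only [of_symm_add, Prod.fst_add, Prod.snd_add, map_add]; abel
  map_smul' k p := by simp
  map_lie' {p q} := by
    simp only [bracket_ofTwoCocycle, Equiv.symm_apply_apply, ZeroMemClass.coe_zero,
      LinearMap.zero_apply, zero_add, LieHom.map_lie, map_sub, add_lie, lie_add, hfg, hg, add_zero]
    rw [← lie_skew (g _), hfg]
    abel

@[simp] theorem lift_inl {f : S →ₗ⁅K⁆ M} {g : V →ₗ[K] M} (hfg : ∀ x v, ⁅f x, g v⁆ = g ⁅x, v⁆)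
    (hg : ∀ v w, ⁅g v, g w⁆ = 0) (v : V) : lift f g hfg hg (inl K S V v) = g v := by
  simp [lift, inl]

@[simp] theorem lift_inr {f : S →ₗ⁅K⁆ M} {g : V →ₗ[K] M} (hfg : ∀ x v, ⁅f x, g v⁆ = g ⁅x, v⁆)
    (hg : ∀ v w, ⁅g v, g w⁆ = 0) (x : S) : lift f g hfg hg (inr K S V x) = f x := by
  simp [lift, inr]

end SplitExtension

section Small

noncomputable instance (M : Type w) [LieRing M] [Small.{u} M] : LieRing (Shrink.{u} M) :=
  (equivShrink M).symm.lieRing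

noncomputable instance (K : Type v) (M : Type w) [CommRing K] [LieRing M] [LieAlgebra K M]
    [Small.{u} M] : LieAlgebra K (Shrink.{u} M) :=
  (equivShrink M).symm.lieAlgebra K

instance {R V W : Type*} [Semiring R] [AddCommMonoid V] [Module R V] [AddCommMonoid W] [Module R W]
    [Small.{u} V] [Small.{u} W] : Small.{u} (V →ₗ[R] W) :=
  small_of_injective DFunLike.coe_injective

instance {K S V : Type*} [Small.{u} V] : Small.{u} (TrivialLieModule K S V) :=
  inferInstanceAs (Small.{u} V)

instance {m n R : Type*} [Small.{u} m] [Small.{u} n] [Small.{u} R] : Small.{u} (Matrix m n R) :=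
  inferInstanceAs (Small.{u} (m → n → R))

instance {K M : Type*} [CommRing K] [LieRing M] [LieAlgebra K M] [Small.{u} M] :
    Small.{u} (LieDerivation K M M) :=
  small_of_injective DFunLike.coe_injective

instance {K M S : Type*} [CommRing K] [LieRing M] [LieAlgebra K M] [LieRing S] [LieAlgebra K S]
    [Small.{u} M] [Small.{u} S] (ψ : S →ₗ⁅K⁆ LieDerivation K M M) : Small.{u} (M ⋊⁅ψ⁆ S) :=
  small_map SemiDirectSum.toProd

end Small

theorem pow_dvd_derivation_apply {R A : Type*} [CommSemiring R] [CommSemiring A] [Algebra R A]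
    (D : Derivation R A A) {a b : A} {n : ℕ} (hb : a ^ (n + 1) ∣ b) : a ^ n ∣ D b := by
  obtain ⟨c, rfl⟩ := hb
  have h_leibniz : D (a ^ (n + 1) * c) = a ^ n * (a * D c + (n + 1) * c * D a) := by
    simp only [Derivation.leibniz, Derivation.leibniz_pow, smul_eq_mul, nsmul_eq_mul,
      Nat.add_sub_cancel, Nat.cast_add, Nat.cast_one]
    ring
  exact ⟨_, h_leibniz⟩

/-- An operator on `A` in the `L`-submodule generated by the identity is a differential operator, of
some order `k`. The source of the operators is the trivial module so that `L` acts on them by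
composition instead of by the commutator, which annihilates the identity. -/
theorem pow_dvd_apply_of_mem_lieSpan {K L A : Type*} [CommRing K] [LieRing L] [LieAlgebra K L]
    [CommRing A] [Algebra K A] [LieRingModule L A] [LieModule K L A]
    (hA : ∀ (x : L) (a b : A), ⁅x, a * b⁆ = ⁅x, a⁆ * b + a * ⁅x, b⁆) (a : A)
    {T : TrivialLieModule K L A →ₗ[K] A}
    (hT : T ∈ LieSubmodule.lieSpan K L {(TrivialLieModule.equiv K L A).toLinearMap}) :
    ∃ k, ∀ n b, a ^ (n + k) ∣ TrivialLieModule.equiv K L A b → a ^ n ∣ T b := by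
  induction hT using LieSubmodule.lieSpan_induction K L with
  | mem T hT =>
    obtain rfl := hT
    exact ⟨0, fun n b hb ↦ hb⟩
  | zero => exact ⟨0, fun n b _ ↦ dvd_zero _⟩
  | add T S _ _ hT hS =>
    obtain ⟨k, hT⟩ := hT
    obtain ⟨l, hS⟩ := hS
    exact ⟨k + l, fun n b hb ↦ dvd_add (hT n b ((pow_dvd_pow a (by lia)).trans hb))
      (hS n b ((pow_dvd_pow a (by lia)).trans hb))⟩
  | smul r T _ hT =>
    obtain ⟨k, hT⟩ := hT
    exact ⟨k, fun n b hb ↦ dvd_smul_of_dvd r (hT n b hb)⟩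
  | lie x T _ hT =>
    obtain ⟨k, hT⟩ := hT
    refine ⟨k + 1, fun n b hb ↦ ?_⟩
    let D : Derivation K A A := .mk' (LieModule.toEnd K L A x) fun a b ↦ by
      simp [hA, mul_comm, add_comm]
    rw [LieHom.lie_apply, trivial_lie_zero L (TrivialLieModule K L A), map_zero, sub_zero]
    exact pow_dvd_derivation_apply D (hT (n + 1) b (by rwa [add_right_comm]))

section linearForm

variable {K : Type*} [CommRing K] {V ι : Type*} [AddCommGroup V] [Module K V]
  (b : Module.Basis ι K V)

/-- The vectors of `V` as linear forms in variables indexed by a basis; this identifies the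
polynomial algebra with the symmetric algebra of `V`. -/
noncomputable def linearForm : V →ₗ[K] MvPolynomial ι K :=
  b.constr K MvPolynomial.X

theorem linearForm_basis (i : ι) : linearForm b (b i) = MvPolynomial.X i :=
  b.constr_basis K _ i

theorem aeval_linearForm (θ : V →ₗ[K] K) (v : V) :
    MvPolynomial.aeval (θ ∘ b) (linearForm b v) = θ v := by
  have h_comp : (MvPolynomial.aeval (R := K) (θ ∘ b)).toLinearMap ∘ₗ linearForm b = θ :=
    b.ext fun i ↦ by simp [linearForm_basis]
  exact LinearMap.congr_fun h_comp v

/-- The derivation of the polynomial algebra extending an endomorphism of the linear forms. -/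
noncomputable def linearFormDerivation :
    Module.End K V →ₗ[K] Derivation K (MvPolynomial ι K) (MvPolynomial ι K) where
  toFun T := MvPolynomial.mkDerivation K fun i ↦ linearForm b (T (b i))
  map_add' T S := MvPolynomial.derivation_ext fun i ↦ by simp [MvPolynomial.mkDerivation_X]
  map_smul' k T := MvPolynomial.derivation_ext fun i ↦ by simp [MvPolynomial.mkDerivation_X]

theorem linearFormDerivation_linearForm (T : Module.End K V) (v : V) :
    linearFormDerivation b T (linearForm b v) = linearForm b (T v) := by
  have h_comp : (linearFormDerivation b T).toLinearMap ∘ₗ linearForm b = linearForm b ∘ₗ T :=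
    b.ext fun i ↦ by simp [linearFormDerivation, linearForm_basis, MvPolynomial.mkDerivation_X]
  exact LinearMap.congr_fun h_comp v

attribute [local instance] LieRing.ofAssociativeRing

/-- `linearFormDerivation` as a homomorphism of Lie algebras. -/
noncomputable def linearFormDerivationHom :
    Module.End K V →ₗ⁅K⁆ Derivation K (MvPolynomial ι K) (MvPolynomial ι K) where
  __ := linearFormDerivation b
  map_lie' {T S} := MvPolynomial.derivation_ext fun i ↦ by
    simp [← linearForm_basis b, linearFormDerivation_linearForm, Derivation.commutator_apply,
      LieRing.of_associative_ring_bracket]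

end linearForm

/-- An extended inner endomorphism of the Lie algebra `L`: an endomorphism of `M` for every
homomorphism `L → M`, compatible with homomorphisms under `L`. Only Lie algebras `M` in the universe
of `L` are considered. -/
structure ExtendedInnerEndomorphism_s13 (K : Type v) [CommRing K] (L : Type u) [LieRing L]
    [LieAlgebra K L] where
  app (M : Type u) [LieRing M] [LieAlgebra K M] : (L →ₗ⁅K⁆ M) → (M →ₗ⁅K⁆ M)
  naturality (M₁ M₂ : Type u) [LieRing M₁] [LieAlgebra K M₁] [LieRing M₂] [LieAlgebra K M₂]
    (f₁ : L →ₗ⁅K⁆ M₁) (f₂ : L →ₗ⁅K⁆ M₂) (h : M₁ →ₗ⁅K⁆ M₂) :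
    h.comp f₁ = f₂ → (app M₂ f₂).comp h = h.comp (app M₁ f₁)

namespace ExtendedInnerEndomorphism_s13

variable {K : Type v} [CommRing K] {L : Type u} [LieRing L] [LieAlgebra K L]
  (β : ExtendedInnerEndomorphism_s13 K L)

/-- The value of `β` on a Lie algebra that is merely isomorphic to one in the universe `u`. -/
noncomputable def appSmall {M : Type w} [LieRing M] [LieAlgebra K M] [Small.{u} M]
    (f : L →ₗ⁅K⁆ M) : M →ₗ⁅K⁆ M :=
  let e : Shrink.{u} M ≃ₗ⁅K⁆ M := (equivShrink M).symm.lieEquiv K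
  (e.toLieHom.comp (β.app (Shrink.{u} M) (e.symm.toLieHom.comp f))).comp e.symm.toLieHom

theorem appSmall_map {M : Type w₁} [LieRing M] [LieAlgebra K M] [Small.{u} M]
    {N : Type w₂} [LieRing N] [LieAlgebra K N] [Small.{u} N]
    {f : L →ₗ⁅K⁆ M} {g : L →ₗ⁅K⁆ N} (h : M →ₗ⁅K⁆ N) (hfg : ∀ x, h (f x) = g x) (m : M) :
    β.appSmall g (h m) = h (β.appSmall f m) := by
  let eM : Shrink.{u} M ≃ₗ⁅K⁆ M := (equivShrink M).symm.lieEquiv K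
  let eN : Shrink.{u} N ≃ₗ⁅K⁆ N := (equivShrink N).symm.lieEquiv K
  have h_nat := LieHom.congr_fun (β.naturality _ _ (eM.symm.toLieHom.comp f)
    (eN.symm.toLieHom.comp g) ((eN.symm.toLieHom.comp h).comp eM.toLieHom)
    (by ext x; simp [hfg])) (eM.symm m)
  simp only [LieHom.comp_apply, LieEquiv.coe_toLieHom, LieEquiv.apply_symm_apply] at h_nat
  exact (congrArg eN h_nat).trans (eN.apply_symm_apply _)

theorem appSmall_eq_app {M : Type u} [LieRing M] [LieAlgebra K M] (f : L →ₗ⁅K⁆ M) (m : M) :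
    β.appSmall f m = β.app M f m := by
  let e : Shrink.{u} M ≃ₗ⁅K⁆ M := (equivShrink M).symm.lieEquiv K
  have h_nat := LieHom.congr_fun (β.naturality _ _ f (e.symm.toLieHom.comp f) e.symm.toLieHom rfl) m
  exact (congrArg e h_nat).trans (e.apply_symm_apply _)

section moduleEnd

variable {V : Type w} [AddCommGroup V] [Module K V] [LieRingModule L V] [LieModule K L V]
  [Small.{u} V]

variable (V) in
/-- The operator by which `β` acts on the abelian ideal `V` of `V ⋊ L`, for an `L`-module `V`. -/
noncomputable def moduleEnd : V →ₗ[K] V :=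
  SplitExtension.projIdeal K L V ∘ₗ (β.appSmall (SplitExtension.inr K L V)).toLinearMap ∘ₗ
    SplitExtension.inl K L V

theorem inl_moduleEnd (v : V) : SplitExtension.inl K L V (β.moduleEnd V v) =
    β.appSmall (SplitExtension.inr K L V) (SplitExtension.inl K L V v) := by
  refine SplitExtension.inl_projIdeal ?_
  rw [LinearMap.comp_apply, LieHom.coe_toLinearMap,
    ← β.appSmall_map (g := LieHom.id) (SplitExtension.proj K L V) fun _ ↦ rfl,
    SplitExtension.proj_inl, map_zero]

theorem appSmall_apply_of_equivariant {M : Type w₁} [LieRing M] [LieAlgebra K M] [Small.{u} M]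
    (f : L →ₗ⁅K⁆ M) (g : V →ₗ[K] M) (hfg : ∀ x v, ⁅f x, g v⁆ = g ⁅x, v⁆)
    (hg : ∀ v w, ⁅g v, g w⁆ = 0) (v : V) : β.appSmall f (g v) = g (β.moduleEnd V v) := by
  have h_lift := β.appSmall_map (SplitExtension.lift f g hfg hg)
    (SplitExtension.lift_inr hfg hg) (SplitExtension.inl K L V v)
  rwa [← inl_moduleEnd, SplitExtension.lift_inl, SplitExtension.lift_inl] at h_lift

theorem moduleEnd_map {W : Type w₁} [AddCommGroup W] [Module K W] [LieRingModule L W]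
    [LieModule K L W] [Small.{u} W] (h : V →ₗ⁅K,L⁆ W) (v : V) :
    β.moduleEnd W (h v) = h (β.moduleEnd V v) := by
  apply SplitExtension.inl_injective (K := K) (S := L)
  rw [inl_moduleEnd]
  exact β.appSmall_apply_of_equivariant _ (SplitExtension.inl K L W ∘ₗ h.toLinearMap)
    (fun x v ↦ by simp) (fun v w ↦ SplitExtension.lie_inl_inl _ _) v

theorem moduleEnd_mem_lieSpan (v : V) : β.moduleEnd V v ∈ LieSubmodule.lieSpan K L {v} := by
  have hv : v ∈ LieSubmodule.lieSpan K L {v} := LieSubmodule.subset_lieSpan rfl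
  rw [show β.moduleEnd V v = _ from β.moduleEnd_map (LieSubmodule.incl _) ⟨v, hv⟩]
  exact Subtype.prop _

end moduleEnd

section scalar

variable [Small.{u} K]

/-- The scalar by which `β` acts on the trivial one-dimensional `L`-module. -/
noncomputable def scalar : K :=
  TrivialLieModule.equiv K L K (β.moduleEnd _ ((TrivialLieModule.equiv K L K).symm 1))

theorem appSmall_apply_of_lie_eq_zero {M : Type w} [LieRing M] [LieAlgebra K M] [Small.{u} M]
    {f : L →ₗ⁅K⁆ M} {m : M} (hm : ∀ x, ⁅f x, m⁆ = 0) : β.appSmall f m = β.scalar • m := by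
  have h_span := β.appSmall_apply_of_equivariant f
    (LinearMap.toSpanSingleton K M m ∘ₗ (TrivialLieModule.equiv K L K).toLinearMap)
    (fun x k ↦ by simp [hm, trivial_lie_zero]) (fun k l ↦ by simp)
    ((TrivialLieModule.equiv K L K).symm 1)
  simpa [scalar] using h_span

theorem moduleEnd_apply_of_lie_eq_zero {V : Type w} [AddCommGroup V] [Module K V]
    [LieRingModule L V] [LieModule K L V] [Small.{u} V] {v : V} (hv : ∀ x : L, ⁅x, v⁆ = 0) :
    β.moduleEnd V v = β.scalar • v := by
  apply SplitExtension.inl_injective (K := K) (S := L)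
  rw [inl_moduleEnd, map_smul]
  exact β.appSmall_apply_of_lie_eq_zero fun x ↦ by simp [hv]

end scalar

section algebra

attribute [local instance] LieRing.ofAssociativeRing

theorem isIdempotentElem_scalar [Small.{u} K] : IsIdempotentElem β.scalar := by
  have h_scalar (X : Matrix (Fin 2) (Fin 2) K) : β.appSmall (0 : L →ₗ⁅K⁆ _) X = β.scalar • X :=
    β.appSmall_apply_of_lie_eq_zero fun x ↦ by simp
  let E : Matrix (Fin 2) (Fin 2) K := Matrix.single 0 0 1
  let F : Matrix (Fin 2) (Fin 2) K := Matrix.single 0 1 1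
  have hEF : ⁅E, F⁆ = F := by simp [E, F, LieRing.of_associative_ring_bracket]
  have h_lie := (β.appSmall (0 : L →ₗ⁅K⁆ Matrix (Fin 2) (Fin 2) K)).map_lie E F
  rw [hEF, h_scalar, h_scalar, smul_lie, lie_smul, hEF, smul_smul] at h_lie
  simpa [F, IsIdempotentElem] using (congrFun₂ h_lie 0 1).symm

section Ring

variable {A : Type w} [Ring A] [Algebra K A] [LieRingModule L A] [LieModule K L A]
  [Small.{u} A]

/-- In `3 × 3` matrices of operators on `A`, multiplication is the bracket of the abelian pieces
`A E₀₁` and `A E₁₂`. -/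
theorem moduleEnd_mul (hA : ∀ (x : L) (a b : A), ⁅x, a * b⁆ = ⁅x, a⁆ * b + a * ⁅x, b⁆) (a b : A) :
    β.moduleEnd A (a * b) = β.moduleEnd A a * β.moduleEnd A b := by
  let f : L →ₗ⁅K⁆ Matrix (Fin 3) (Fin 3) (Module.End K A) :=
    (Matrix.scalarAlgHom (Fin 3) K).toLieHom.comp (LieModule.toEnd K L A)
  let E (i j : Fin 3) : A →ₗ[K] Matrix (Fin 3) (Fin 3) (Module.End K A) :=
    Matrix.singleLinearMap K i j ∘ₗ (Algebra.lmul K A).toLinearMap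
  have hE (i j : Fin 3) (a : A) : E i j a = Matrix.single i j (Algebra.lmul K A a) := rfl
  have h_lmul (x : L) (a : A) :
      ⁅LieModule.toEnd K L A x, Algebra.lmul K A a⁆ = Algebra.lmul K A ⁅x, a⁆ := by
    ext b
    simp [LieRing.of_associative_ring_bracket, hA]
  have h_app {i j : Fin 3} (hij : i ≠ j) (a : A) :
      β.appSmall f (E i j a) = E i j (β.moduleEnd A a) := by
    refine β.appSmall_apply_of_equivariant f (E i j) (fun x a ↦ ?_) (fun a b ↦ ?_) a
    · rw [hE, hE, ← h_lmul]
      ext p q : 1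
      by_cases h : i = p ∧ j = q <;>
        simp [f, LieRing.of_associative_ring_bracket, Matrix.scalar_apply, h]
    · simp [hE, LieRing.of_associative_ring_bracket, hij.symm]
  have h_mul (a b : A) : ⁅E 0 1 a, E 1 2 b⁆ = E 0 2 (a * b) := by
    simp [hE, LieRing.of_associative_ring_bracket, -Algebra.coe_lmul_eq_mul]
  have h_lie := h_mul (β.moduleEnd A a) (β.moduleEnd A b)
  rw [← h_app (by decide), ← h_app (by decide), ← LieHom.map_lie, h_mul, h_app (by decide)] at h_lie
  exact Algebra.lmul_injective (congrFun₂ h_lie 0 2)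

end Ring

variable {A : Type w} [CommRing A] [Algebra K A] [LieRingModule L A] [LieModule K L A]
  (hA : ∀ (x : L) (a b : A), ⁅x, a * b⁆ = ⁅x, a⁆ * b + a * ⁅x, b⁆)

include hA in
theorem exists_dvd_moduleEnd_pow [Small.{u} A] (a : A) : ∃ n, a ∣ β.moduleEnd A (a ^ (n + 1)) := by
  let e := TrivialLieModule.equiv K L A
  let evalAt (b : A) : (TrivialLieModule K L A →ₗ[K] A) →ₗ⁅K,L⁆ A :=
    { LinearMap.applyₗ (e.symm b) with map_lie' := by simp [trivial_lie_zero] }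
  have h_eval (b : A) : β.moduleEnd _ e.toLinearMap (e.symm b) = β.moduleEnd A b :=
    (β.moduleEnd_map (evalAt b) e.toLinearMap).symm
  obtain ⟨k, hk⟩ := pow_dvd_apply_of_mem_lieSpan hA a (β.moduleEnd_mem_lieSpan _)
  have h_dvd := hk 1 (e.symm (a ^ (1 + k))) dvd_rfl
  rw [h_eval, pow_one, add_comm] at h_dvd
  exact ⟨k, h_dvd⟩

include hA in
theorem algHom_moduleEnd [IsReduced K] [Small.{u} K] [Small.{u} A] (φ : A →ₐ[K] K) (a : A) :
    φ (β.moduleEnd A a) = β.scalar * φ a := by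
  have h_pow (a : A) (n : ℕ) : β.moduleEnd A (a ^ (n + 1)) = β.moduleEnd A a ^ (n + 1) := by
    induction n with
    | zero => simp
    | succ n ih => rw [pow_succ, β.moduleEnd_mul hA, ih, ← pow_succ]
  have h_zero {a : A} (ha : φ a = 0) : φ (β.moduleEnd A a) = 0 := by
    obtain ⟨n, b, hb⟩ := β.exists_dvd_moduleEnd_pow hA a
    refine eq_zero_of_pow_eq_zero (n := n + 1) ?_
    rw [← map_pow, ← h_pow, hb, map_mul, ha, zero_mul]
  have h_one (x : L) : ⁅x, (1 : A)⁆ = 0 := by simpa using hA x 1 1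
  have h_sub := h_zero (a := a - φ a • 1) (by simp)
  rw [map_sub, map_smul, β.moduleEnd_apply_of_lie_eq_zero h_one] at h_sub
  simpa [sub_eq_zero, mul_comm] using h_sub

end algebra

section Field

variable {K : Type v} [Field K] [Small.{u} K] {L : Type u} [LieRing L] [LieAlgebra K L]
  (β : ExtendedInnerEndomorphism_s13 K L)

attribute [local instance] LieRing.ofAssociativeRing

theorem moduleEnd_apply {V : Type w} [AddCommGroup V] [Module K V] [LieRingModule L V]
    [LieModule K L V] [Small.{u} V] (v : V) : β.moduleEnd V v = β.scalar • v := by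
  let b := Module.Basis.ofVectorSpace K V
  let A := MvPolynomial (Module.Basis.ofVectorSpaceIndex K V) K
  let ρ := (linearFormDerivationHom b).comp (LieModule.toEnd K L V)
  let : LieRingModule L A := .compLieHom A ρ
  have : LieModule K L A := .compLieHom A ρ
  have h_leibniz (x : L) (p q : A) : ⁅x, p * q⁆ = ⁅x, p⁆ * q + p * ⁅x, q⁆ :=
    ((ρ x).leibniz p q).trans (by rw [add_comm, smul_eq_mul, smul_eq_mul, mul_comm q]; rfl)
  let h : V →ₗ⁅K,L⁆ A :=
    { linearForm b with
      map_lie' {x w} := (linearFormDerivation_linearForm b (LieModule.toEnd K L V x) w).symm }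
  have h_coord (i) (w : V) : MvPolynomial.aeval (b.coord i ∘ b) (h w) = b.coord i w :=
    aeval_linearForm b _ w
  refine b.ext_elem fun i ↦ ?_
  have h_aeval := β.algHom_moduleEnd h_leibniz (MvPolynomial.aeval (b.coord i ∘ b)) (h v)
  rwa [β.moduleEnd_map, h_coord, h_coord, ← smul_eq_mul, ← map_smul] at h_aeval

theorem scalar_smul_appSmall_lie {M : Type w} [LieRing M] [LieAlgebra K M] [Small.{u} M]
    (f : L →ₗ⁅K⁆ M) (m n : M) : β.scalar • ⁅β.appSmall f m, n⁆ = β.scalar • ⁅m, n⁆ := by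
  let : LieRingModule L M := .compLieHom M f
  have : LieModule K L M := .compLieHom M f
  let i := SplitExtension.inl K M M
  let j := SplitExtension.inr K M M
  have h_inl (n : M) : β.appSmall (j.comp f) (i n) = β.scalar • i n := by
    rw [β.appSmall_apply_of_equivariant (j.comp f) i (fun x n ↦ SplitExtension.lie_inr_inl _ _)
      SplitExtension.lie_inl_inl, moduleEnd_apply, map_smul]
  have h_inr : β.appSmall (j.comp f) (j m) = j (β.appSmall f m) :=
    β.appSmall_map j (fun _ ↦ rfl) m
  apply SplitExtension.inl_injective (K := K) (S := M)
  rw [map_smul, map_smul]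
  calc β.scalar • i ⁅β.appSmall f m, n⁆ = ⁅j (β.appSmall f m), β.scalar • i n⁆ := by
        rw [lie_smul, SplitExtension.lie_inr_inl]
    _ = β.appSmall (j.comp f) ⁅j m, i n⁆ := by rw [LieHom.map_lie, h_inl, h_inr]
    _ = β.scalar • i ⁅m, n⁆ := by rw [SplitExtension.lie_inr_inl, h_inl]

theorem appSmall_lie_of_lie_eq_zero {M : Type w} [LieRing M] [LieAlgebra K M] [Small.{u} M]
    {f : L →ₗ⁅K⁆ M} {y : M} (hy : ∀ x, ⁅f x, y⁆ = 0) (m : M) :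
    β.appSmall f ⁅y, m⁆ = β.scalar • ⁅y, m⁆ := by
  rw [LieHom.map_lie, β.appSmall_apply_of_lie_eq_zero hy, smul_lie, ← lie_skew, smul_neg,
    scalar_smul_appSmall_lie, ← smul_neg, lie_skew]

theorem appSmall_apply {M : Type w} [LieRing M] [LieAlgebra K M] [Small.{u} M]
    (f : L →ₗ⁅K⁆ M) (m : M) : β.appSmall f m = β.scalar • m := by
  let A := MvPolynomial PUnit.{1} K
  let D : LieDerivation K (A ⊗[K] M) (A ⊗[K] M) :=
    Lie.Derivation.ofDerivation M (MvPolynomial.pderiv PUnit.unit)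
  let const : M →ₗ⁅K⁆ A ⊗[K] M := { TensorProduct.mk K A M 1 with map_lie' := by simp }
  have h_const (n : M) : const n = 1 ⊗ₜ n := rfl
  let ψ : LieDerivation K (A ⊗[K] M) (A ⊗[K] M) →ₗ⁅K⁆ _ := LieHom.id
  let i := (SemiDirectSum.inl ψ).comp const
  let y := SemiDirectSum.inr ψ D
  have h_lie (z : A ⊗[K] M) : ⁅y, SemiDirectSum.inl ψ z⁆ = SemiDirectSum.inl ψ (D z) := by
    simp [y, ψ]
  have h_comm (n : M) : ⁅i n, y⁆ = 0 := by
    rw [← lie_skew, LieHom.comp_apply, h_lie, h_const]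
    simp [D]
  have h_bracket : ⁅y, SemiDirectSum.inl ψ (MvPolynomial.X PUnit.unit ⊗ₜ m)⁆ = i m := by
    rw [h_lie, LieHom.comp_apply, h_const]
    simp [D, A]
  have h_inj : Function.Injective i :=
    (SemiDirectSum.inl_injective _).comp (Module.Flat.tensorProduct_mk_injective K M A)
  have h_app := β.appSmall_lie_of_lie_eq_zero (f := i.comp f) (fun x ↦ h_comm (f x))
    (SemiDirectSum.inl ψ (MvPolynomial.X PUnit.unit ⊗ₜ m))
  refine h_inj ?_
  rw [← β.appSmall_map i (g := i.comp f) (fun _ ↦ rfl), ← h_bracket, h_app, h_bracket, map_smul]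

end Field

end ExtendedInnerEndomorphism_s13

theorem extended_inner_endomorphism_of_LieAlgebra
    (K : Type v) [Field K] (L : Type u) [LieRing L] [LieAlgebra K L]
    (β : ∀ (M : Type u) [LieRing M] [LieAlgebra K M], (L →ₗ⁅K⁆ M) → (M →ₗ⁅K⁆ M))
    (hnat : ∀ (M₁ M₂ : Type u) [LieRing M₁] [LieAlgebra K M₁] [LieRing M₂] [LieAlgebra K M₂]
      (f₁ : L →ₗ⁅K⁆ M₁) (f₂ : L →ₗ⁅K⁆ M₂) (h : M₁ →ₗ⁅K⁆ M₂),
      h.comp f₁ = f₂ → (β M₂ f₂).comp h = h.comp (β M₁ f₁)) :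
    (∀ (M : Type u) [LieRing M] [LieAlgebra K M] (f : L →ₗ⁅K⁆ M) (m : M),
        β M f m = 0) ∨
    (∀ (M : Type u) [LieRing M] [LieAlgebra K M] (f : L →ₗ⁅K⁆ M) (m : M),
        β M f m = m) := by
  let β' : ExtendedInnerEndomorphism_s13 K L := ⟨β, hnat⟩
  by_cases hK : Small.{u} K
  · have h_smul (M : Type u) [LieRing M] [LieAlgebra K M] (f : L →ₗ⁅K⁆ M) (m : M) :
        β M f m = β'.scalar • m :=
      (β'.appSmall_eq_app f m).symm.trans (β'.appSmall_apply f m)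
    rcases IsIdempotentElem.iff_eq_zero_or_one.mp β'.isIdempotentElem_scalar with hc | hc
    · exact .inl fun M _ _ f m ↦ by rw [h_smul, hc, zero_smul]
    · exact .inr fun M _ _ f m ↦ by rw [h_smul, hc, one_smul]
  · -- The line spanned by a nonzero vector of `M : Type u` is a copy of `K`.
    refine .inl fun M _ _ f m ↦ by_contra fun hne ↦ hK ?_
    exact small_of_injective (smul_left_injective K hne)
end

section
/- Let G be a group and A a G-set (a type with a multiplicative left action of G), both in universe u. Suppose given, for every G-set B in universe u and every G-equivariant map f : B → A, a G-equivariant map E f : B → B, such that for all G-equivariant maps f₁ : B₁ → A, f₂ : B₂ → A and every G-equivariant h : B₁ → B₂ with f₂ ∘ h = f₁, one has (E f₂) ∘ h = h ∘ (E f₁). Then there exists a function g : A → G satisfying g (h • a) = h * g a * h⁻¹ for all h ∈ G and a ∈ A, such that for every G-equivariant f : B → A and every b ∈ B, E f b = g (f b) • b. In particular, every E f is bijective, so every such family of endomorphisms is in fact a family of automorphisms. -/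
universe u

/-!
The category of `M`-sets has the regular `M`-set as free object on one generator, so naturality
along the orbit map `M → B` of a point `b` over `A` forces `E f b = g (f b) • b`, where `g a` is
the value at `1` of the endomorphism attached to the orbit map `M → A` of `a`. Evaluating the same
endomorphism at `m` in two ways, by this formula and by equivariance, gives
`g (m • a) * m = m * g a`. This relation makes two maps `b ↦ g (f b) • b` and `b ↦ k (f b) • b`
compose to the one given by the pointwise product of `k` and `g`, so pointwise inverses of `g`
yield inverses of the `E f`.
-/

universe v w

/-- The orbit map of a point `b`, as an equivariant map out of the regular `M`-set. -/
def orbitHom (M : Type*) [Monoid M] {B : Type*} [MulAction M B] (b : B) : M →[M] B where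
  toFun m := m • b
  map_smul' m x := mul_smul m x b

/-- The families of the paper called extended co-inner endomorphisms of the `M`-set `A`: equivariant
endomaps of all `M`-sets `B` over `A`, natural in `B`. Naturality is stated pointwise, with the
commuting triangle over `A` given by an equation on elements. -/
def IsExtendedCoinnerEndomorphism {M : Type w} [Monoid M] {A : Type v} [MulAction M A]
    (E : ∀ (B : Type u) [MulAction M B], (B →[M] A) → (B →[M] B)) : Prop :=
  ∀ (B₁ B₂ : Type u) [MulAction M B₁] [MulAction M B₂]
    (f₁ : B₁ →[M] A) (f₂ : B₂ →[M] A) (h : B₁ →[M] B₂),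
    (∀ b : B₁, f₂ (h b) = f₁ b) → ∀ b : B₁, E B₂ f₂ (h b) = h (E B₁ f₁ b)

section FiberwiseAction

variable {M A B : Type*} [Monoid M] [MulAction M A] [MulAction M B]

theorem smul_map_smul_of_semiconjBy {g : A → M}
    (hg : ∀ (m : M) (a : A), SemiconjBy m (g a) (g (m • a)))
    (k : A → M) (f : B →[M] A) (b : B) :
    g (f (k (f b) • b)) • k (f b) • b = (k (f b) * g (f b)) • b := by
  rw [map_smul, smul_smul, (hg (k (f b)) (f b)).eq]

theorem bijective_units_smul_of_semiconjBy {g : A → Mˣ}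
    (hg : ∀ (m : M) (a : A), SemiconjBy m (g a : M) (g (m • a))) (f : B →[M] A) :
    Function.Bijective fun b => (g (f b) : M) • b := by
  have hg_inv (m : M) (a : A) : SemiconjBy m (↑(g a)⁻¹ : M) ↑(g (m • a))⁻¹ :=
    (hg m a).units_inv_right
  refine Function.bijective_iff_has_inverse.mpr
    ⟨fun b => (↑(g (f b))⁻¹ : M) • b, fun b => ?_, fun b => ?_⟩
  · simpa only [Units.mul_inv, one_smul] using
      smul_map_smul_of_semiconjBy hg_inv (fun a => (g a : M)) f b
  · simpa only [Units.inv_mul, one_smul] using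
      smul_map_smul_of_semiconjBy hg (fun a => (↑(g a)⁻¹ : M)) f b

end FiberwiseAction

namespace IsExtendedCoinnerEndomorphism

variable {M : Type u} [Monoid M] {A : Type v} [MulAction M A]
  {E : ∀ (B : Type u) [MulAction M B], (B →[M] A) → (B →[M] B)}

/-- The element of `M` by which the family `E` acts on points over `a`: the value at the generator
`1` of its component at the orbit map of `a`. -/
def coefficient (E : ∀ (B : Type u) [MulAction M B], (B →[M] A) → (B →[M] B)) (a : A) : M :=
  E M (orbitHom M a) 1

theorem apply_orbitHom (a : A) (m : M) : E M (orbitHom M a) m = m * coefficient E a := by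
  simpa only [coefficient, smul_eq_mul, mul_one] using map_smul (E M (orbitHom M a)) m 1

theorem apply_eq_coefficient_smul (hE : IsExtendedCoinnerEndomorphism E)
    {B : Type u} [MulAction M B] (f : B →[M] A) (b : B) :
    E B f b = coefficient E (f b) • b := by
  have orbitHom_over (m : M) : f (orbitHom M b m) = orbitHom M (f b) m := map_smul f m b
  calc
    E B f b = E B f (orbitHom M b 1) := congrArg (E B f) (one_smul M b).symm
    _ = orbitHom M b (E M (orbitHom M (f b)) 1) := hE M B _ f (orbitHom M b) orbitHom_over 1
    _ = coefficient E (f b) • b := rfl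

theorem semiconjBy_coefficient (hE : IsExtendedCoinnerEndomorphism E) (m : M) (a : A) :
    SemiconjBy m (coefficient E a) (coefficient E (m • a)) :=
  (apply_orbitHom a m).symm.trans (hE.apply_eq_coefficient_smul (orbitHom M a) m)

theorem isUnit_coefficient_of_bijective {a : A}
    (ha : Function.Bijective (E M (orbitHom M a))) : IsUnit (coefficient E a) := by
  rwa [funext (apply_orbitHom a), ← IsUnit.isUnit_iff_mulRight_bijective] at ha

theorem forall_isUnit_coefficient_iff_bijective (hE : IsExtendedCoinnerEndomorphism E) :
    (∀ a : A, IsUnit (coefficient E a)) ↔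
      ∀ (B : Type u) [MulAction M B] (f : B →[M] A), Function.Bijective (E B f) := by
  refine ⟨fun hunit B _ f => ?_, fun hbij a => isUnit_coefficient_of_bijective (hbij M _)⟩
  choose g hg using hunit
  rw [funext (hE.apply_eq_coefficient_smul f)]
  simp only [← hg]
  exact bijective_units_smul_of_semiconjBy
    (fun m a => by simpa only [hg] using hE.semiconjBy_coefficient m a) f

end IsExtendedCoinnerEndomorphism

theorem extended_coinner_endomorphism_of_GSet_general
    {M : Type u} [Monoid M] {A : Type v} [MulAction M A]
    {E : ∀ (B : Type u) [MulAction M B], (B →[M] A) → (B →[M] B)}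
    (hE : IsExtendedCoinnerEndomorphism E) :
    ∃ g : A → M,
      (∀ (m : M) (a : A), SemiconjBy m (g a) (g (m • a))) ∧
      (∀ (B : Type u) [MulAction M B] (f : B →[M] A) (b : B), E B f b = g (f b) • b) ∧
      ((∀ a : A, IsUnit (g a)) ↔
        ∀ (B : Type u) [MulAction M B] (f : B →[M] A), Function.Bijective (E B f)) :=
  ⟨IsExtendedCoinnerEndomorphism.coefficient E, hE.semiconjBy_coefficient,
    fun _ _ => hE.apply_eq_coefficient_smul, hE.forall_isUnit_coefficient_iff_bijective⟩

theorem extended_coinner_endomorphism_of_GSet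
    (G : Type u) [Group G] (A : Type u) [MulAction G A]
    (E : ∀ (B : Type u) [MulAction G B], (B →[G] A) → (B →[G] B))
    (hnat : ∀ (B₁ B₂ : Type u) [MulAction G B₁] [MulAction G B₂]
      (f₁ : B₁ →[G] A) (f₂ : B₂ →[G] A) (h : B₁ →[G] B₂),
      (∀ b : B₁, f₂ (h b) = f₁ b) →
      ∀ b : B₁, E B₂ f₂ (h b) = h (E B₁ f₁ b)) :
    ∃ g : A → G,
      (∀ (h : G) (a : A), g (h • a) = h * g a * h⁻¹) ∧
      (∀ (B : Type u) [MulAction G B] (f : B →[G] A) (b : B),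
        E B f b = g (f b) • b) ∧
      (∀ (B : Type u) [MulAction G B] (f : B →[G] A),
        Function.Bijective (E B f)) := by
  obtain ⟨g, hg, hE, hbij⟩ := extended_coinner_endomorphism_of_GSet_general hnat
  exact ⟨g, fun h a => eq_mul_inv_of_mul_eq (hg h a).eq.symm, hE,
    hbij.mp fun a => Group.isUnit (g a)⟩
end

section
/- Let G be a group acting on a set A (multiplicative left action), and let S ⊆ A be a set of orbit representatives, i.e., a subset containing exactly one element of each G-orbit of A. Let T be the set of functions g : A → G satisfying g (h • a) = h * g a * h⁻¹ for all h ∈ G and a ∈ A. Then T is a subgroup of the group of all functions A → G under pointwise multiplication, and the restriction map sending g ∈ T to the family (g s)_{s ∈ S} is a group isomorphism from T onto the direct product, over s ∈ S, of the centralizers in G of the stabilizer subgroups of the points s; in particular, for every g ∈ T and s ∈ S, g s centralizes the stabilizer of s in G. -/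
universe u

/-!
An equivariant function is determined on each orbit by its value at one representative `s`, since
its value at `x • s` is `φ x` applied to its value at `s`. A prescribed value at `s` extends to the
orbit exactly when `φ x` of it depends only on `x • s`, that is, when it is fixed by the stabilizer
of `s`. For the conjugation action, the elements fixed by a subgroup form its centralizer.
-/

section Equivariant

variable {G N A : Type*} [Group G] [Group N] [MulAction G A] (φ : G →* MulAut N)

variable (A) in
/-- The group of functions `A → N` equivariant for the action `φ` of `G` on `N`. For
`φ = MulAut.conj` these are the functions parametrizing the extended co-inner endomorphisms
of `A`. The action is a homomorphism, not an instance, because `G` already acts on itself by left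
multiplication. -/
def equivariantSubgroup : Subgroup (A → N) where
  carrier := {f | ∀ (h : G) (a : A), f (h • a) = φ h (f a)}
  mul_mem' hf hg h a := by simp only [Pi.mul_apply, hf h a, hg h a, map_mul]
  one_mem' h _ := (map_one (φ h)).symm
  inv_mem' hf h a := by simp only [Pi.inv_apply, hf h a, map_inv]

/-- The subgroup of elements of `N` fixed by a subgroup `H` of `G` under the action `φ`. -/
def fixedSubgroup (H : Subgroup G) : Subgroup N where
  carrier := {n | ∀ h ∈ H, φ h n = n}
  mul_mem' hm hn h hh := by rw [map_mul, hm h hh, hn h hh]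
  one_mem' h _ := map_one (φ h)
  inv_mem' hn h hh := by rw [map_inv, hn h hh]

theorem fixedSubgroup_conj :
    fixedSubgroup (MulAut.conj : G →* MulAut G) =
      fun H : Subgroup G => Subgroup.centralizer (H : Set G) := by
  ext H n
  exact forall₂_congr fun _ _ => mul_inv_eq_iff_eq_mul

variable {φ}

theorem apply_mem_fixedSubgroup_stabilizer {f : A → N} (hf : f ∈ equivariantSubgroup A φ)
    (a : A) : f a ∈ fixedSubgroup φ (MulAction.stabilizer G a) := fun h hh => by
  rw [← hf h a, MulAction.mem_stabilizer_iff.mp hh]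

theorem apply_eq_apply_of_smul_eq_smul {a : A} {n : N}
    (hn : n ∈ fixedSubgroup φ (MulAction.stabilizer G a)) {x y : G} (hxy : x • a = y • a) :
    φ x n = φ y n := by
  have hstab : y⁻¹ * x ∈ MulAction.stabilizer G a := by
    rw [MulAction.mem_stabilizer_iff, mul_smul, hxy, inv_smul_smul]
  calc φ x n = φ y (φ (y⁻¹ * x) n) := by rw [← MulAut.mul_apply, ← map_mul, mul_inv_cancel_left]
    _ = φ y n := by rw [hn _ hstab]

namespace equivariantSubgroup

variable {S : Set A}

variable (φ S) in
/-- Restriction of equivariant functions to `S`, as a homomorphism into the product of the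
subgroups fixed by the point stabilizers. -/
def restrict :
    equivariantSubgroup A φ →* ∀ s : S, fixedSubgroup φ (MulAction.stabilizer G (s : A)) where
  toFun f s := ⟨f.1 s, apply_mem_fixedSubgroup_stabilizer f.2 s⟩
  map_one' := rfl
  map_mul' _ _ := rfl

theorem restrict_injective (hS : ∀ a : A, ∃ s ∈ S, a ∈ MulAction.orbit G s) :
    Function.Injective (restrict φ S) := by
  intro f g hfg
  ext a
  obtain ⟨s, hs, x, rfl⟩ := hS a
  have hs_eq : f.1 s = g.1 s := congrArg Subtype.val (congrFun hfg ⟨s, hs⟩)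
  exact (f.2 x s).trans ((congrArg (φ x) hs_eq).trans (g.2 x s).symm)

theorem restrict_surjective (hS : ∀ a : A, ∃! s : A, s ∈ S ∧ a ∈ MulAction.orbit G s) :
    Function.Surjective (restrict φ S) := by
  intro c
  have exists_value (a : A) : ∃ n : N, ∀ (s : S) (x : G), x • (s : A) = a → n = φ x (c s) := by
    obtain ⟨s, ⟨hs, x, hx⟩, hunique⟩ := hS a
    refine ⟨φ x (c ⟨s, hs⟩), fun t y hy => ?_⟩
    obtain rfl : t = ⟨s, hs⟩ := Subtype.ext (hunique t ⟨t.2, y, hy⟩)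
    exact apply_eq_apply_of_smul_eq_smul (c _).2 (hx.trans hy.symm)
  choose f hf using exists_value
  have f_mem : f ∈ equivariantSubgroup A φ := by
    intro h a
    obtain ⟨s, ⟨hs, x, hx⟩, -⟩ := hS a
    calc f (h • a) = φ (h * x) (c ⟨s, hs⟩) :=
          hf _ ⟨s, hs⟩ _ ((mul_smul h x s).trans (congrArg (h • ·) hx))
      _ = φ h (φ x (c ⟨s, hs⟩)) := by rw [map_mul, MulAut.mul_apply]
      _ = φ h (f a) := by rw [hf a ⟨s, hs⟩ x hx]
  refine ⟨⟨f, f_mem⟩, funext fun s => Subtype.ext ?_⟩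
  calc f s = φ 1 (c s) := hf s s 1 (one_smul G _)
    _ = c s := by rw [map_one, MulAut.one_apply]

variable (φ) in
/-- Restriction to a set of orbit representatives, as an isomorphism. -/
noncomputable def restrictEquiv (hS : ∀ a : A, ∃! s : A, s ∈ S ∧ a ∈ MulAction.orbit G s) :
    equivariantSubgroup A φ ≃* ∀ s : S, fixedSubgroup φ (MulAction.stabilizer G (s : A)) :=
  MulEquiv.ofBijective (restrict φ S)
    ⟨restrict_injective fun a => (hS a).exists, restrict_surjective hS⟩

end equivariantSubgroup

theorem coinner_group_of_GSet_general (φ : G →* MulAut N) (S : Set A)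
    (hS : ∀ a : A, ∃! s : A, s ∈ S ∧ s ∈ MulAction.orbit G a) :
    ∃ T : Subgroup (A → N),
      (∀ g : A → N, g ∈ T ↔ ∀ (h : G) (a : A), g (h • a) = φ h (g a)) ∧
      (∀ g ∈ T, ∀ s ∈ S, g s ∈ fixedSubgroup φ (MulAction.stabilizer G s)) ∧
      ∃ e : T ≃* (∀ s : S, fixedSubgroup φ (MulAction.stabilizer G (s : A))),
        ∀ (g : T) (s : S), (e g s : N) = (g : A → N) (s : A) := by
  have hS' (a : A) : ∃! s : A, s ∈ S ∧ a ∈ MulAction.orbit G s := by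
    simpa only [MulAction.mem_orbit_symm (a₁ := a)] using hS a
  exact ⟨equivariantSubgroup A φ, fun _ => Iff.rfl,
    fun _ hg s _ => apply_mem_fixedSubgroup_stabilizer hg s,
    equivariantSubgroup.restrictEquiv φ hS', fun _ _ => rfl⟩

end Equivariant

theorem coinner_group_of_GSet
    (G : Type u) [Group G] (A : Type u) [MulAction G A]
    (S : Set A)
    (hS : ∀ a : A, ∃! s : A, s ∈ S ∧ s ∈ MulAction.orbit G a) :
    ∃ T : Subgroup (A → G),
      (∀ g : A → G,
        g ∈ T ↔ ∀ (h : G) (a : A), g (h • a) = h * g a * h⁻¹) ∧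
      (∀ g ∈ T, ∀ s ∈ S,
        g s ∈ Subgroup.centralizer ((MulAction.stabilizer G s : Subgroup G) : Set G)) ∧
      ∃ e : T ≃* (∀ s : S, Subgroup.centralizer
          ((MulAction.stabilizer G (s : A) : Subgroup G) : Set G)),
        ∀ (g : T) (s : S), ((e g s : G)) = (g : A → G) (s : A) := by
  have h := coinner_group_of_GSet_general MulAut.conj S hS
  rwa [fixedSubgroup_conj] at h
end

section
/- Suppose given, for every commutative ring S in universe u, a ring homomorphism β S : S →+* S, such that for every ring homomorphism h : S₁ →+* S₂ between commutative rings in universe u, one has h.comp (β S₁) = (β S₂).comp h. Then β S is the identity ring homomorphism of S for every commutative ring S. -/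
universe u

/-!
By the universal property of `k[X]`, a natural family of self-maps of commutative `k`-algebras
is evaluation of the single polynomial `p = β k[X] X`. If the family fixes every element of `k`,
then `p` and `X` agree as functions on `k`, so `p = X` when `k` is an infinite domain. Commutative
rings are the `ℤ`-algebras, and every ring endomorphism of `ℤ` is the identity; `ULift` places `ℤ`
in the universe of the given rings.
-/

section NaturalSelfMaps

open Polynomial

variable {k : Type u} [CommRing k]
  (β : ∀ (A : Type u) [CommRing A] [Algebra k A], A → A)
  (hnat : ∀ (A B : Type u) [CommRing A] [CommRing B] [Algebra k A] [Algebra k B]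
    (h : A →ₐ[k] B) (a : A), h (β A a) = β B (h a))

include hnat

theorem aeval_apply_X_of_natural (A : Type u) [CommRing A] [Algebra k A] (a : A) :
    aeval a (β k[X] X) = β A a := by
  rw [hnat, aeval_X]

theorem apply_X_eq_X_of_natural [IsDomain k] [Infinite k] (hk : ∀ c : k, β k c = c) :
    β k[X] X = X := by
  refine Polynomial.funext fun c => ?_
  calc
    eval c (β k[X] X) = aeval c (β k[X] X) := by rw [coe_aeval_eq_eval]
    _ = β k c := aeval_apply_X_of_natural β hnat k c
    _ = c := hk c
    _ = eval c X := eval_X.symm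

theorem endomorphism_of_identity_functor_CommRing_general [IsDomain k] [Infinite k]
    (hk : ∀ c : k, β k c = c) (A : Type u) [CommRing A] [Algebra k A] (a : A) :
    β A a = a := by
  rw [← aeval_apply_X_of_natural β hnat, apply_X_eq_X_of_natural β hnat hk, aeval_X]

end NaturalSelfMaps

instance isDomain_ulift {R : Type*} [Semiring R] [IsDomain R] : IsDomain (ULift.{u} R) :=
  (ULift.ringEquiv : ULift.{u} R ≃+* R).toMulEquiv.isDomain

theorem endomorphism_of_identity_functor_CommRing
    (β : ∀ (S : Type u) [CommRing S], S →+* S)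
    (hnat : ∀ (S₁ S₂ : Type u) [CommRing S₁] [CommRing S₂] (h : S₁ →+* S₂),
      h.comp (β S₁) = (β S₂).comp h) :
    ∀ (S : Type u) [CommRing S], β S = RingHom.id S := by
  intro S _
  let _ : Algebra (ULift.{u} ℤ) S := ULift.algebra' ℤ S
  have fixes_int (n : ULift.{u} ℤ) : β (ULift.{u} ℤ) n = n := map_intCast (β _) n.down
  exact RingHom.ext <| endomorphism_of_identity_functor_CommRing_general (fun A _ _ => β A)
    (fun A B _ _ _ _ h => RingHom.congr_fun (hnat A B h)) fixes_int S
end
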